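/- arXiv:2110.12092 — 8 statements merged into one kernel-verified Lean document; each statement's English description precedes it below -/
import Mathlib

section
/- Let E be a separable Banach space and E_1, …, E_N closed subspaces of E such that E is the (internal, topological) direct sum E = E_1 ⊕ … ⊕ E_N. If E has a besselian Schauder frame, then for each j ∈ {1, …, N} the Banach space E_j has a besselian Schauder frame. -/
open Filter Topology

/-- `((a n, b n))` is a Schauder frame of `X`: the partial sums `∑_{j<n} b j x • a j`
converge in norm to `x` for every `x ∈ X`. -/
def IsSchauderFrame {X : Type*} [NormedAddCommGroup X] [NormedSpace ℝ X]
    (a : ℕ → X) (b : ℕ → X →L[ℝ] ℝ) : Prop :=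
  ∀ x : X, Tendsto (fun n => ∑ j ∈ Finset.range n, b j x • a j) atTop (𝓝 x)

/-- `((a n, b n))` is a besselian pair of `X`: there is `A > 0` such that
`∑ |b n x| |y (a n)| ≤ A ‖x‖ ‖y‖` for all `x ∈ X`, `y ∈ X*`. -/
def IsBesselianPair {X : Type*} [NormedAddCommGroup X] [NormedSpace ℝ X]
    (a : ℕ → X) (b : ℕ → X →L[ℝ] ℝ) : Prop :=
  ∃ A > (0 : ℝ), ∀ (x : X) (y : X →L[ℝ] ℝ),
    Summable (fun n => |b n x| * |y (a n)|) ∧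
    ∑' n, |b n x| * |y (a n)| ≤ A * ‖x‖ * ‖y‖

/-- A besselian Schauder frame is a pair which is both a Schauder frame and a
besselian pair. -/
def IsBesselianSchauderFrame {X : Type*} [NormedAddCommGroup X] [NormedSpace ℝ X]
    (a : ℕ → X) (b : ℕ → X →L[ℝ] ℝ) : Prop :=
  IsSchauderFrame a b ∧ IsBesselianPair a b

/-!
By the open mapping theorem, the addition map `∏ⱼ Eⱼ → E` is an isomorphism, so each coordinate
projection `P : E → Eⱼ` is bounded. A bounded retraction carries a besselian Schauder frame
`(aₙ, bₙ)` of `E` to the frame `(P aₙ, bₙ|Eⱼ)` of `Eⱼ`: apply `P` to the expansion of `x ∈ Eⱼ`,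
and test the besselian bound of `E` on `x` and `y ∘ P`.
-/

section Transport

variable {X Y : Type*} [NormedAddCommGroup X] [NormedSpace ℝ X]
  [NormedAddCommGroup Y] [NormedSpace ℝ Y] {a : ℕ → X} {b : ℕ → X →L[ℝ] ℝ}

theorem IsSchauderFrame.map_of_leftInverse (h : IsSchauderFrame a b) {P : X →L[ℝ] Y}
    {S : Y →L[ℝ] X} (hPS : Function.LeftInverse P S) :
    IsSchauderFrame (fun n => P (a n)) (fun n => b n ∘L S) := by
  intro y
  have hlim : Tendsto (fun n => P (∑ j ∈ Finset.range n, b j (S y) • a j)) atTop (𝓝 (P (S y))) :=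
    (P.continuous.tendsto (S y)).comp (h (S y))
  simpa only [map_sum, map_smul, hPS y, ContinuousLinearMap.comp_apply] using hlim

theorem IsBesselianPair.map (h : IsBesselianPair a b) (P : X →L[ℝ] Y) (S : Y →L[ℝ] X) :
    IsBesselianPair (fun n => P (a n)) (fun n => b n ∘L S) := by
  obtain ⟨A, hA, hbound⟩ := h
  -- The `+ 1` keeps the constant positive when `P = 0` or `S = 0`.
  refine ⟨A * (‖S‖ * ‖P‖ + 1), by positivity, fun y φ => ?_⟩
  obtain ⟨hsum, hle⟩ := hbound (S y) (φ ∘L P)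
  refine ⟨hsum, hle.trans ?_⟩
  calc
    A * ‖S y‖ * ‖φ ∘L P‖ ≤ A * (‖S‖ * ‖y‖) * (‖φ‖ * ‖P‖) := by
      gcongr
      · exact S.le_opNorm y
      · exact φ.opNorm_comp_le P
    _ = A * (‖S‖ * ‖P‖) * ‖y‖ * ‖φ‖ := by ring
    _ ≤ A * (‖S‖ * ‖P‖ + 1) * ‖y‖ * ‖φ‖ := by
      gcongr
      exact le_add_of_nonneg_right zero_le_one

theorem IsBesselianSchauderFrame.map_of_leftInverse (h : IsBesselianSchauderFrame a b)
    {P : X →L[ℝ] Y} {S : Y →L[ℝ] X} (hPS : Function.LeftInverse P S) :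
    IsBesselianSchauderFrame (fun n => P (a n)) (fun n => b n ∘L S) :=
  ⟨h.1.map_of_leftInverse hPS, h.2.map P S⟩

end Transport

section SumSubtype

variable {R M ι : Type*} [Semiring R] [AddCommMonoid M] [Module R M] [TopologicalSpace M]
  [ContinuousAdd M] [Fintype ι]

/-- The addition map `(cᵢ) ↦ ∑ᵢ cᵢ` from the product of finitely many submodules to the ambient
module, as a continuous linear map. Its bijectivity says that the module is their internal direct
sum. -/
def sumSubtypeL (F : ι → Submodule R M) : (∀ i, F i) →L[R] M :=
  ∑ i, (F i).subtypeL ∘L ContinuousLinearMap.proj i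

theorem sumSubtypeL_apply (F : ι → Submodule R M) (c : ∀ i, F i) :
    sumSubtypeL F c = ∑ i, (c i : M) := by
  simp [sumSubtypeL]

theorem sumSubtypeL_single [DecidableEq ι] (F : ι → Submodule R M) (j : ι) (x : F j) :
    sumSubtypeL F (Pi.single j x) = x := by
  rw [sumSubtypeL_apply, Finset.sum_eq_single_of_mem j (Finset.mem_univ j), Pi.single_eq_same]
  intro i _ hij
  rw [Pi.single_eq_of_ne hij, ZeroMemClass.coe_zero]

theorem bijective_sumSubtypeL_iff {F : ι → Submodule R M} :
    Function.Bijective (sumSubtypeL F) ↔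
      ∀ x : M, ∃! c : ι → M, (∀ i, c i ∈ F i) ∧ ∑ i, c i = x := by
  simp only [Function.bijective_iff_existsUnique, sumSubtypeL_apply]
  refine forall_congr' fun x => ⟨?_, ?_⟩
  · rintro ⟨c, hc, hunique⟩
    refine ⟨fun i => c i, ⟨fun i => (c i).2, hc⟩, ?_⟩
    rintro d ⟨hd, hdx⟩
    exact congrArg (fun e i => (e i : M)) (hunique (fun i => ⟨d i, hd i⟩) hdx)
  · rintro ⟨c, ⟨hc, hcx⟩, hunique⟩
    refine ⟨fun i => ⟨c i, hc i⟩, hcx, fun d hdx => ?_⟩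
    ext i
    exact congrFun (hunique (fun i => d i) ⟨fun i => (d i).2, hdx⟩) i

end SumSubtype

theorem closedComplemented_of_bijective_sumSubtypeL {𝕜 E ι : Type*} [NontriviallyNormedField 𝕜]
    [NormedAddCommGroup E] [NormedSpace 𝕜 E] [CompleteSpace E] [Fintype ι]
    {F : ι → Submodule 𝕜 E} (hclosed : ∀ i, IsClosed (F i : Set E))
    (hF : Function.Bijective (sumSubtypeL F)) (j : ι) : (F j).ClosedComplemented := by
  classical
  have (i : ι) : CompleteSpace (F i) := (hclosed i).completeSpace_coe
  let e : (∀ i, F i) ≃L[𝕜] E := .ofBijective (sumSubtypeL F)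
    (LinearMap.ker_eq_bot.2 hF.injective) (LinearMap.range_eq_top.2 hF.surjective)
  refine ⟨ContinuousLinearMap.proj j ∘L e.symm.toContinuousLinearMap, fun x => ?_⟩
  have he : e.symm x = Pi.single j x := e.symm_apply_eq.2 (sumSubtypeL_single F j x).symm
  change e.symm x j = x
  rw [he, Pi.single_eq_same]

/-- If a separable Banach space `E` is the topological direct sum of closed subspaces
`E₁, …, E_N` and `E` has a besselian Schauder frame, then each `E_j` has a besselian
Schauder frame. -/
theorem besselianSchauderFrame_of_directSum_summand
    {E : Type*} [NormedAddCommGroup E] [NormedSpace ℝ E] [CompleteSpace E]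
    [TopologicalSpace.SeparableSpace E]
    (N : ℕ) (F : Fin N → Submodule ℝ E)
    (hclosed : ∀ j, IsClosed (F j : Set E))
    (hdirect : ∀ x : E, ∃! c : Fin N → E, (∀ j, c j ∈ F j) ∧ ∑ j, c j = x)
    (hframe : ∃ (a : ℕ → E) (b : ℕ → E →L[ℝ] ℝ), IsBesselianSchauderFrame a b) :
    ∀ j, ∃ (a : ℕ → F j) (b : ℕ → (F j) →L[ℝ] ℝ), IsBesselianSchauderFrame a b := by
  intro j
  obtain ⟨a, b, hab⟩ := hframe
  obtain ⟨P, hP⟩ : (F j).ClosedComplemented :=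
    closedComplemented_of_bijective_sumSubtypeL hclosed (bijective_sumSubtypeL_iff.2 hdirect) j
  exact ⟨_, _, hab.map_of_leftInverse (S := (F j).subtypeL) hP⟩
end

section
/- Let E be a separable Banach space and E_1, …, E_N closed subspaces of E such that E is the (internal, topological) direct sum E = E_1 ⊕ … ⊕ E_N. If for each j ∈ {1, …, N} the Banach space E_j has a Schauder frame, then E has a Schauder frame. -/
open Filter Topology

/-!
By the open mapping theorem the sum map `∏ j, F j → E` of a direct sum decomposition is an
isomorphism, so it suffices to find a Schauder frame of a finite product `∏ i, X i`. Visit the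
factors along any sequence `ρ : ℕ → ι` that meets every index infinitely often, and at step
`n`, after `Nat.count (ρ · = ρ n) n` earlier visits to the same factor, use the next term of its
frame: then the `i`-th coordinate of the partial sums runs through the partial sums of the frame of
`X i`, with repetitions.
-/

theorem sum_range_ite_count {M : Type*} [AddCommMonoid M] (p : ℕ → Prop) [DecidablePred p]
    (f : ℕ → M) (n : ℕ) :
    ∑ j ∈ Finset.range n, (if p j then f (Nat.count p j) else 0) =
      ∑ q ∈ Finset.range (Nat.count p n), f q := by
  induction n with
  | zero => simp
  | succ n ih =>
    rw [Finset.sum_range_succ, ih, Nat.count_succ]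
    split_ifs
    · rw [Finset.sum_range_succ]
    · simp

theorem tendsto_count_atTop {p : ℕ → Prop} [DecidablePred p] (hp : {n | p n}.Infinite) :
    Tendsto (Nat.count p) atTop atTop :=
  tendsto_atTop_atTop_of_monotone (Nat.count_monotone p) fun n =>
    ⟨Nat.nth p n, (Nat.count_nth_of_infinite hp n).ge⟩

theorem exists_nat_seq_infinite_fibers (ι : Type*) [Countable ι] [Nonempty ι] :
    ∃ ρ : ℕ → ι, ∀ i, {n | ρ n = i}.Infinite := by
  obtain ⟨g, hg⟩ := exists_surjective_nat (ι × ℕ)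
  refine ⟨fun n => (g n).1, fun i => Set.infinite_of_injective_forall_mem
    (f := fun k => Function.surjInv hg (i, k)) ?_ fun k => ?_⟩
  · exact (Function.injective_surjInv hg).comp (Prod.mk_right_injective i)
  · simp [Function.surjInv_eq hg]

namespace IsSchauderFrame

theorem of_subsingleton {X : Type*} [NormedAddCommGroup X] [NormedSpace ℝ X] [Subsingleton X]
    (a : ℕ → X) (b : ℕ → X →L[ℝ] ℝ) : IsSchauderFrame a b := fun x =>
  tendsto_const_nhds.congr fun _ => Subsingleton.elim x _

theorem map_of_rightInverse {X Y : Type*} [NormedAddCommGroup X] [NormedSpace ℝ X]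
    [NormedAddCommGroup Y] [NormedSpace ℝ Y] {a : ℕ → X} {b : ℕ → X →L[ℝ] ℝ}
    (hab : IsSchauderFrame a b) {P : X →L[ℝ] Y} {S : Y →L[ℝ] X}
    (hPS : Function.RightInverse S P) :
    IsSchauderFrame (fun n => P (a n)) (fun n => b n ∘L S) := fun y => by
  simpa [hPS y, Function.comp_def] using (P.continuous.tendsto (S y)).comp (hab (S y))

section Pi

variable {ι : Type*} [Fintype ι] {X : ι → Type*} [∀ i, NormedAddCommGroup (X i)]
  [∀ i, NormedSpace ℝ (X i)]

theorem pi_interleave [DecidableEq ι] {a : ∀ i, ℕ → X i} {b : ∀ i, ℕ → X i →L[ℝ] ℝ}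
    (hab : ∀ i, IsSchauderFrame (a i) (b i)) {ρ : ℕ → ι} (hρ : ∀ i, {n | ρ n = i}.Infinite) :
    IsSchauderFrame (fun n => Pi.single (ρ n) (a (ρ n) (Nat.count (ρ · = ρ n) n)))
      (fun n => b (ρ n) (Nat.count (ρ · = ρ n) n) ∘L ContinuousLinearMap.proj (ρ n)) := by
  refine fun x => tendsto_pi_nhds.2 fun i => ?_
  refine ((hab i (x i)).comp (tendsto_count_atTop (hρ i))).congr fun n => ?_
  rw [Function.comp_apply, ← sum_range_ite_count, Finset.sum_apply]
  refine Finset.sum_congr rfl fun j _ => ?_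
  split_ifs with hj
  · subst hj
    simp
  · simp [Pi.single_eq_of_ne' hj]

theorem exists_pi (h : ∀ i, ∃ (a : ℕ → X i) (b : ℕ → X i →L[ℝ] ℝ), IsSchauderFrame a b) :
    ∃ (a : ℕ → ∀ i, X i) (b : ℕ → (∀ i, X i) →L[ℝ] ℝ), IsSchauderFrame a b := by
  classical
  choose a b hab using h
  cases isEmpty_or_nonempty ι
  · exact ⟨0, 0, of_subsingleton 0 0⟩
  · obtain ⟨ρ, hρ⟩ := exists_nat_seq_infinite_fibers ι
    exact ⟨_, _, pi_interleave hab hρ⟩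

end Pi

end IsSchauderFrame

theorem bijective_sum_coe_iff_existsUnique {ι M S : Type*} [Fintype ι] [AddCommMonoid M]
    [SetLike S M] (F : ι → S) :
    Function.Bijective (fun v : ∀ j, F j => ∑ j, (v j : M)) ↔
      ∀ x : M, ∃! c : ι → M, (∀ j, c j ∈ F j) ∧ ∑ j, c j = x := by
  rw [Function.bijective_iff_existsUnique]
  refine forall_congr' fun x => ⟨?_, ?_⟩
  · rintro ⟨v, hv, hunique⟩
    exact ⟨fun j => v j, ⟨fun j => (v j).2, hv⟩, fun c hc =>
      funext fun j => congrArg Subtype.val (congrFun (hunique (fun j => ⟨c j, hc.1 j⟩) hc.2) j)⟩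
  · rintro ⟨c, ⟨hmem, hsum⟩, hunique⟩
    exact ⟨fun j => ⟨c j, hmem j⟩, hsum, fun v hv =>
      funext fun j => Subtype.ext (congrFun (hunique (fun j => v j) ⟨fun j => (v j).2, hv⟩) j)⟩

/-- The isomorphism `(v j)_j ↦ ∑ j, v j` from the product of a finite family of complete subspaces
onto the ambient Banach space, when every vector decomposes uniquely along the family. It is built
from the open mapping theorem, so the continuity of its inverse is the boundedness of the
projections onto the summands. -/
noncomputable def piEquivOfBijectiveSum {𝕜 E ι : Type*} [NontriviallyNormedField 𝕜]
    [NormedAddCommGroup E] [NormedSpace 𝕜 E] [CompleteSpace E] [Fintype ι]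
    (F : ι → Submodule 𝕜 E) [∀ j, CompleteSpace (F j)]
    (hF : Function.Bijective fun v : ∀ j, F j => ∑ j, (v j : E)) : (∀ j, F j) ≃L[𝕜] E :=
  .ofBijective
    { toFun := fun v => ∑ j, (v j : E)
      map_add' := fun v w => by simp [Finset.sum_add_distrib]
      map_smul' := fun r v => by simp [Finset.smul_sum] }
    (LinearMap.ker_eq_bot.2 hF.injective) (LinearMap.range_eq_top.2 hF.surjective)

/-- If a separable Banach space `E` is the topological direct sum of closed subspaces
`E₁, …, E_N` each of which has a Schauder frame, then `E` has a Schauder frame. -/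
theorem schauderFrame_of_directSum
    {E : Type*} [NormedAddCommGroup E] [NormedSpace ℝ E] [CompleteSpace E]
    [TopologicalSpace.SeparableSpace E]
    (N : ℕ) (F : Fin N → Submodule ℝ E)
    (hclosed : ∀ j, IsClosed (F j : Set E))
    (hdirect : ∀ x : E, ∃! c : Fin N → E, (∀ j, c j ∈ F j) ∧ ∑ j, c j = x)
    (hframes : ∀ j, ∃ (a : ℕ → F j) (b : ℕ → (F j) →L[ℝ] ℝ), IsSchauderFrame a b) :
    ∃ (a : ℕ → E) (b : ℕ → E →L[ℝ] ℝ), IsSchauderFrame a b := by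
  have (j : Fin N) : CompleteSpace (F j) := (hclosed j).completeSpace_coe
  let e := piEquivOfBijectiveSum F ((bijective_sum_coe_iff_existsUnique F).2 hdirect)
  obtain ⟨a, b, hab⟩ := IsSchauderFrame.exists_pi hframes
  exact ⟨_, _, hab.map_of_rightInverse (P := e.toContinuousLinearMap)
    (S := e.symm.toContinuousLinearMap) e.apply_symm_apply⟩
end

section
/- Let E be a separable Banach space and E_1, …, E_N closed subspaces of E such that E is the (internal, topological) direct sum E = E_1 ⊕ … ⊕ E_N. If for each j ∈ {1, …, N} the Banach space E_j has a besselian Schauder frame, then E has a besselian Schauder frame. -/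
open Filter Topology

/-!
The direct sum hypothesis makes the summation map `∏ⱼ Eⱼ → E` a continuous bijection of Banach
spaces, hence an isomorphism by the open mapping theorem; its inverse provides bounded
projections `pⱼ : E → Eⱼ` with `id = ∑ⱼ ιⱼ ∘ pⱼ`. Composing a frame of `Eⱼ` with `ιⱼ` and `pⱼ`
expands the operator `ιⱼ ∘ pⱼ` into a besselian series on `E`, and interleaving two such series
expands the sum of the two operators. Summing over `j` expands the identity, which is a frame.
-/

/-- The sequence `u 0, v 0, u 1, v 1, …`. It merges the series of two operators into a series for
their sum. -/
def interleave {α : Type*} (u v : ℕ → α) (n : ℕ) : α :=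
  if Even n then u (n / 2) else v (n / 2)

section Interleave

variable {α : Type*} (u v : ℕ → α) (n : ℕ)

@[simp]
theorem interleave_two_mul : interleave u v (2 * n) = u n := by
  simp [interleave]

@[simp]
theorem interleave_two_mul_add_one : interleave u v (2 * n + 1) = v n := by
  have half : (2 * n + 1) / 2 = n := by lia
  simp [interleave, half]

end Interleave

section EvenOdd

variable {M : Type*} [AddCommMonoid M]

theorem sum_range_eq_sum_even_add_sum_odd (f : ℕ → M) (n : ℕ) :
    ∑ k ∈ Finset.range n, f k =
      ∑ k ∈ Finset.range ((n + 1) / 2), f (2 * k) +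
        ∑ k ∈ Finset.range (n / 2), f (2 * k + 1) := by
  induction n with
  | zero => simp
  | succ n ih =>
    rw [Finset.sum_range_succ, ih]
    obtain ⟨k, rfl | rfl⟩ := Nat.even_or_odd' n
    · rw [show (2 * k + 1 + 1) / 2 = k + 1 by lia, show (2 * k + 1) / 2 = k by lia,
        show 2 * k / 2 = k by lia, Finset.sum_range_succ, add_right_comm]
    · rw [show (2 * k + 1 + 1 + 1) / 2 = k + 1 by lia, show (2 * k + 1 + 1) / 2 = k + 1 by lia,
        show (2 * k + 1) / 2 = k by lia, Finset.sum_range_succ (fun j => f (2 * j + 1)), add_assoc]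

theorem tendsto_sum_range_of_even_of_odd [TopologicalSpace M] [ContinuousAdd M] {f : ℕ → M}
    {p q : M} (heven : Tendsto (fun n => ∑ k ∈ Finset.range n, f (2 * k)) atTop (𝓝 p))
    (hodd : Tendsto (fun n => ∑ k ∈ Finset.range n, f (2 * k + 1)) atTop (𝓝 q)) :
    Tendsto (fun n => ∑ k ∈ Finset.range n, f k) atTop (𝓝 (p + q)) := by
  have half : Tendsto (fun n : ℕ => n / 2) atTop atTop := Nat.tendsto_div_const_atTop two_ne_zero
  simp only [sum_range_eq_sum_even_add_sum_odd f]
  exact (heven.comp (half.comp (tendsto_add_atTop_nat 1))).add (hodd.comp half)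

end EvenOdd

/-- The operator `T : X → Y` is expanded by the series `T x = ∑ b n x • a n`, converging in norm,
where the pair `((a n, b n))` in `Y × X*` satisfies the besselian inequality. The besselian
Schauder frames of `X` are the expansions of the identity of `X`; unlike frames, expansions can be
composed with bounded operators and added. -/
structure IsBesselianExpansion {X Y : Type*} [NormedAddCommGroup X] [NormedSpace ℝ X]
    [NormedAddCommGroup Y] [NormedSpace ℝ Y] (T : X →L[ℝ] Y) (a : ℕ → Y) (b : ℕ → X →L[ℝ] ℝ) :
    Prop where
  tendsto_sum (x : X) : Tendsto (fun n => ∑ j ∈ Finset.range n, b j x • a j) atTop (𝓝 (T x))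
  bessel : ∃ A > (0 : ℝ), ∀ (x : X) (y : Y →L[ℝ] ℝ),
    Summable (fun n => |b n x| * |y (a n)|) ∧ ∑' n, |b n x| * |y (a n)| ≤ A * ‖x‖ * ‖y‖

section Expansion

variable {W X Y Z : Type*}
  [NormedAddCommGroup W] [NormedSpace ℝ W] [NormedAddCommGroup X] [NormedSpace ℝ X]
  [NormedAddCommGroup Y] [NormedSpace ℝ Y] [NormedAddCommGroup Z] [NormedSpace ℝ Z]

theorem isBesselianExpansion_id_iff {a : ℕ → X} {b : ℕ → X →L[ℝ] ℝ} :
    IsBesselianExpansion (.id ℝ X) a b ↔ IsBesselianSchauderFrame a b :=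
  ⟨fun h => ⟨h.tendsto_sum, h.bessel⟩, fun h => ⟨h.1, h.2⟩⟩

namespace IsBesselianExpansion

theorem zero : IsBesselianExpansion (0 : X →L[ℝ] Y) 0 0 where
  tendsto_sum x := by simp
  bessel := ⟨1, one_pos, fun x y =>
    ⟨by simp [summable_zero], by simpa using mul_nonneg (norm_nonneg x) (norm_nonneg y)⟩⟩

theorem comp {T : X →L[ℝ] Y} {a : ℕ → Y} {b : ℕ → X →L[ℝ] ℝ} (h : IsBesselianExpansion T a b)
    (S : Y →L[ℝ] Z) (R : W →L[ℝ] X) :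
    IsBesselianExpansion (S ∘L T ∘L R) (fun n => S (a n)) (fun n => b n ∘L R) where
  tendsto_sum w := by
    simpa [Function.comp_def] using (S.continuous.tendsto _).comp (h.tendsto_sum (R w))
  bessel := by
    obtain ⟨A, hA, hbound⟩ := h.bessel
    refine ⟨A * (‖S‖ * ‖R‖ + 1), by positivity, fun w y => ?_⟩
    obtain ⟨hsummable, hle⟩ := hbound (R w) (y ∘L S)
    refine ⟨hsummable, hle.trans ?_⟩
    calc A * ‖R w‖ * ‖y ∘L S‖ ≤ A * (‖R‖ * ‖w‖) * (‖y‖ * ‖S‖) := by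
          gcongr
          exacts [R.le_opNorm w, y.opNorm_comp_le S]
      _ = A * (‖S‖ * ‖R‖) * ‖w‖ * ‖y‖ := by ring
      _ ≤ A * (‖S‖ * ‖R‖ + 1) * ‖w‖ * ‖y‖ := by
          gcongr
          exact le_add_of_nonneg_right zero_le_one

theorem add {T T' : X →L[ℝ] Y} {a a' : ℕ → Y} {b b' : ℕ → X →L[ℝ] ℝ}
    (h : IsBesselianExpansion T a b) (h' : IsBesselianExpansion T' a' b') :
    IsBesselianExpansion (T + T') (interleave a a') (interleave b b') where
  tendsto_sum x := by
    refine tendsto_sum_range_of_even_of_odd (p := T x) (q := T' x) ?_ ?_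
    · simpa only [interleave_two_mul] using h.tendsto_sum x
    · simpa only [interleave_two_mul_add_one] using h'.tendsto_sum x
  bessel := by
    obtain ⟨A, hA, hbound⟩ := h.bessel
    obtain ⟨A', hA', hbound'⟩ := h'.bessel
    refine ⟨A + A', by positivity, fun x y => ?_⟩
    obtain ⟨hsummable, hle⟩ := hbound x y
    obtain ⟨hsummable', hle'⟩ := hbound' x y
    have hsum : HasSum (fun n => |interleave b b' n x| * |y (interleave a a' n)|)
        (∑' n, |b n x| * |y (a n)| + ∑' n, |b' n x| * |y (a' n)|) :=
      HasSum.even_add_odd (by simpa only [interleave_two_mul] using hsummable.hasSum)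
        (by simpa only [interleave_two_mul_add_one] using hsummable'.hasSum)
    refine ⟨hsum.summable, hsum.tsum_eq.trans_le ?_⟩
    linarith

end IsBesselianExpansion

theorem exists_isBesselianExpansion_sum {ι : Type*} {s : Finset ι} {T : ι → X →L[ℝ] Y}
    (h : ∀ i ∈ s, ∃ a b, IsBesselianExpansion (T i) a b) :
    ∃ a b, IsBesselianExpansion (∑ i ∈ s, T i) a b :=
  Finset.sum_induction T (fun S => ∃ a b, IsBesselianExpansion S a b)
    (fun _ _ ⟨_, _, hS⟩ ⟨_, _, hS'⟩ => ⟨_, _, hS.add hS'⟩) ⟨_, _, .zero⟩ h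

theorem exists_isBesselianSchauderFrame_of_sum_comp_eq_id {ι : Type*} [Fintype ι]
    {V : ι → Type*} [∀ j, NormedAddCommGroup (V j)] [∀ j, NormedSpace ℝ (V j)]
    {i : ∀ j, V j →L[ℝ] X} {p : ∀ j, X →L[ℝ] V j} (hid : ∑ j, i j ∘L p j = .id ℝ X)
    (hframes : ∀ j, ∃ (a : ℕ → V j) (b : ℕ → V j →L[ℝ] ℝ), IsBesselianSchauderFrame a b) :
    ∃ (a : ℕ → X) (b : ℕ → X →L[ℝ] ℝ), IsBesselianSchauderFrame a b := by
  have hexpansion : ∀ j ∈ Finset.univ, ∃ a b, IsBesselianExpansion (i j ∘L p j) a b := by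
    intro j _
    obtain ⟨a, b, hab⟩ := hframes j
    exact ⟨_, _, (isBesselianExpansion_id_iff.2 hab).comp (i j) (p j)⟩
  obtain ⟨a, b, hab⟩ := exists_isBesselianExpansion_sum hexpansion
  exact ⟨a, b, isBesselianExpansion_id_iff.1 (hid ▸ hab)⟩

end Expansion

section DirectSum

variable {ι : Type*} [Fintype ι]

theorem bijective_sum_coe_of_existsUnique {R M : Type*} [Semiring R] [AddCommMonoid M] [Module R M]
    {F : ι → Submodule R M} (h : ∀ x : M, ∃! c : ι → M, (∀ j, c j ∈ F j) ∧ ∑ j, c j = x) :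
    Function.Bijective fun c : ∀ j, F j => ∑ j, (c j : M) := by
  constructor
  · intro c d hcd
    have hcoe : (fun j => (c j : M)) = fun j => (d j : M) :=
      (h (∑ j, (d j : M))).unique ⟨fun j => (c j).2, hcd⟩ ⟨fun j => (d j).2, rfl⟩
    exact funext fun j => Subtype.ext (congrFun hcoe j)
  · intro x
    obtain ⟨c, ⟨hc, hx⟩, -⟩ := h x
    exact ⟨fun j => ⟨c j, hc j⟩, hx⟩

theorem exists_sum_comp_eq_id_of_bijective {𝕜 E : Type*} [NontriviallyNormedField 𝕜]
    [NormedAddCommGroup E] [NormedSpace 𝕜 E] [CompleteSpace E] {V : ι → Type*}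
    [∀ j, NormedAddCommGroup (V j)] [∀ j, NormedSpace 𝕜 (V j)] [∀ j, CompleteSpace (V j)]
    (i : ∀ j, V j →L[𝕜] E) (h : Function.Bijective fun c : ∀ j, V j => ∑ j, i j (c j)) :
    ∃ p : ∀ j, E →L[𝕜] V j, ∑ j, i j ∘L p j = .id 𝕜 E := by
  let S : (∀ j, V j) →L[𝕜] E := ∑ j, i j ∘L .proj j
  have hS : ⇑S = fun c => ∑ j, i j (c j) := by
    ext c
    simp [S]
  rw [← hS] at h
  let e : (∀ j, V j) ≃L[𝕜] E :=
    .ofBijective S (LinearMap.ker_eq_bot.2 h.1) (LinearMap.range_eq_top.2 h.2)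
  refine ⟨fun j => .proj j ∘L e.symm, ?_⟩
  ext x
  calc (∑ j, i j ∘L .proj j ∘L (e.symm : E →L[𝕜] ∀ j, V j)) x = S (e.symm x) := by simp [hS]
    _ = x := e.apply_symm_apply x

end DirectSum

/-- If a separable Banach space `E` is the topological direct sum of closed subspaces
`E₁, …, E_N` each of which has a besselian Schauder frame, then `E` has a besselian
Schauder frame. -/
theorem besselianSchauderFrame_of_directSum
    {E : Type*} [NormedAddCommGroup E] [NormedSpace ℝ E] [CompleteSpace E]
    [TopologicalSpace.SeparableSpace E]
    (N : ℕ) (F : Fin N → Submodule ℝ E)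
    (hclosed : ∀ j, IsClosed (F j : Set E))
    (hdirect : ∀ x : E, ∃! c : Fin N → E, (∀ j, c j ∈ F j) ∧ ∑ j, c j = x)
    (hframes : ∀ j, ∃ (a : ℕ → F j) (b : ℕ → (F j) →L[ℝ] ℝ), IsBesselianSchauderFrame a b) :
    ∃ (a : ℕ → E) (b : ℕ → E →L[ℝ] ℝ), IsBesselianSchauderFrame a b := by
  have : ∀ j, CompleteSpace (F j) := fun j => (hclosed j).completeSpace_coe
  obtain ⟨p, hp⟩ := exists_sum_comp_eq_id_of_bijective (fun j => (F j).subtypeL)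
    (bijective_sum_coe_of_existsUnique hdirect)
  exact exists_isBesselianSchauderFrame_of_sum_comp_eq_id hp hframes
end

section
/- Let E be a separable Banach space with a besselian Schauder frame and let F be a closed subspace of E that is complemented in E (i.e., there is a bounded linear projection of E onto F). Then the Banach space F has a besselian Schauder frame. -/
open Filter Topology

section Transport

variable {X Y : Type*} [NormedAddCommGroup X] [NormedSpace ℝ X]
  [NormedAddCommGroup Y] [NormedSpace ℝ Y]
  {a : ℕ → X} {b : ℕ → X →L[ℝ] ℝ}

theorem IsSchauderFrame.map_comp_of_leftInverse (h : IsSchauderFrame a b)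
    {T : X →L[ℝ] Y} {S : Y →L[ℝ] X} (hTS : Function.LeftInverse T S) :
    IsSchauderFrame (fun n => T (a n)) (fun n => (b n).comp S) := by
  intro y
  have h_image : Tendsto (fun n => T (∑ j ∈ Finset.range n, b j (S y) • a j)) atTop
      (𝓝 (T (S y))) :=
    (T.continuous.tendsto (S y)).comp (h (S y))
  simpa only [map_sum, map_smul, hTS y, ContinuousLinearMap.comp_apply] using h_image

theorem IsBesselianPair.map_comp (h : IsBesselianPair a b) (T : X →L[ℝ] Y) (S : Y →L[ℝ] X) :
    IsBesselianPair (fun n => T (a n)) (fun n => (b n).comp S) := by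
  obtain ⟨A, hA, hbound⟩ := h
  -- The summands `1` keep the constant positive when `S` or `T` vanishes.
  refine ⟨A * (‖S‖ + 1) * (‖T‖ + 1), by positivity, fun y φ => ?_⟩
  obtain ⟨hsum, hle⟩ := hbound (S y) (φ.comp T)
  have hS : ‖S y‖ ≤ (‖S‖ + 1) * ‖y‖ := S.le_of_opNorm_le (le_add_of_nonneg_right zero_le_one) y
  have hT : ‖φ.comp T‖ ≤ ‖φ‖ * (‖T‖ + 1) :=
    (φ.opNorm_comp_le T).trans (by gcongr; exact le_add_of_nonneg_right zero_le_one)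
  refine ⟨hsum, ?_⟩
  calc ∑' n, |(b n).comp S y| * |φ (T (a n))|
      ≤ A * ‖S y‖ * ‖φ.comp T‖ := hle
    _ ≤ A * ((‖S‖ + 1) * ‖y‖) * (‖φ‖ * (‖T‖ + 1)) := by gcongr
    _ = A * (‖S‖ + 1) * (‖T‖ + 1) * ‖y‖ * ‖φ‖ := by ring

theorem besselianSchauderFrame_of_complemented_subspace_general
    (h : IsBesselianSchauderFrame a b)
    {T : X →L[ℝ] Y} {S : Y →L[ℝ] X} (hTS : Function.LeftInverse T S) :
    IsBesselianSchauderFrame (fun n => T (a n)) (fun n => (b n).comp S) :=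
  ⟨h.1.map_comp_of_leftInverse hTS, h.2.map_comp T S⟩

end Transport

/-- If a separable Banach space `E` has a besselian Schauder frame and `F` is a closed
complemented subspace of `E`, then `F` has a besselian Schauder frame. -/
theorem besselianSchauderFrame_of_complemented_subspace
    {E : Type*} [NormedAddCommGroup E] [NormedSpace ℝ E] [CompleteSpace E]
    [TopologicalSpace.SeparableSpace E]
    (a : ℕ → E) (b : ℕ → E →L[ℝ] ℝ) (h : IsBesselianSchauderFrame a b)
    (F : Submodule ℝ E) (hF : IsClosed (F : Set E))
    (P : E →L[ℝ] E) (hP : ∀ x, P (P x) = P x)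
    (hrange : LinearMap.range (P : E →ₗ[ℝ] E) = F) :
    ∃ (c : ℕ → F) (d : ℕ → F →L[ℝ] ℝ), IsBesselianSchauderFrame c d := by
  have hP_idem : IsIdempotentElem P := ContinuousLinearMap.ext hP
  obtain ⟨Q, hQ⟩ : F.ClosedComplemented :=
    hrange ▸ (ContinuousLinearMap.IsIdempotentElem.isTopCompl hP_idem).closedComplemented
  exact ⟨_, _, besselianSchauderFrame_of_complemented_subspace_general (S := F.subtypeL) h hQ⟩
end

section
/- If a separable Banach space E has a Schauder frame, then there exists a Banach space Z possessing a Schauder basis and a linear isometry T : E → Z whose range T(E) is a closed complemented subspace of Z (so E is isometrically isomorphic to a complemented subspace of Z). -/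
open Filter Topology

universe u

/-- A bundled Banach space over `ℝ`. -/
structure BanachSpace where
  /-- the carrier type -/
  X : Type u
  [nacg : NormedAddCommGroup X]
  [nsp : NormedSpace ℝ X]
  [cplt : CompleteSpace X]

attribute [instance] BanachSpace.nacg BanachSpace.nsp BanachSpace.cplt

/-- `Z` has a Schauder basis: there are vectors `(e n)` and biorthogonal continuous
linear functionals `(f n)` such that every `z` is the norm limit of the partial sums
`∑_{j<n} f j z • e j`. -/
def HasSchauderBasis (Z : Type*) [NormedAddCommGroup Z] [NormedSpace ℝ Z] : Prop :=
  ∃ (e : ℕ → Z) (f : ℕ → Z →L[ℝ] ℝ),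
    (∀ i j, f i (e j) = if i = j then 1 else 0) ∧
    ∀ z : Z, Tendsto (fun n => ∑ j ∈ Finset.range n, f j z • e j) atTop (𝓝 z)

/-- `Z` has an unconditional Schauder basis: there are vectors `(e n)` and biorthogonal
continuous linear functionals `(f n)` such that for every `z` the family
`(f n z • e n)` is unconditionally summable with sum `z`. -/
def HasUnconditionalSchauderBasis (Z : Type*) [NormedAddCommGroup Z] [NormedSpace ℝ Z] : Prop :=
  ∃ (e : ℕ → Z) (f : ℕ → Z →L[ℝ] ℝ),
    (∀ i j, f i (e j) = if i = j then 1 else 0) ∧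
    ∀ z : Z, HasSum (fun n => f n z • e n) z

/-!
Rescale the frame so that `b n x → 0` for every `x`, and let `Z` be the space of pairs `(r, c)` of
null sequences such that `r n` is the tail `∑_{j ≥ n} c j • a j`. Finite truncations of `c` converge
to `(r, c)` because what they miss is measured by the tails of `r`, so `Z` has a basis. Sending `x`
to the remainders and coefficients of its frame expansion embeds `E` in `Z`, and the total sum `r 0`
is a left inverse. Hence `Z ≃ E × K` with `K` the kernel of the total sum, and passing to the
product norm makes the embedding of `E` isometric.
-/

open scoped ZeroAtInfty

universe v

section NullSequences

/-- A null sequence as an element of `c₀`, encoded as `C₀(ℕ, F)` with `ℕ` discrete. -/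
def nullSeq {F : Type*} [TopologicalSpace F] [Zero F] (u : ℕ → F) (hu : Tendsto u atTop (𝓝 0)) :
    C₀(ℕ, F) where
  toFun := u
  continuous_toFun := continuous_of_discreteTopology
  zero_at_infty' := cocompact_eq_atTop (α := ℕ) ▸ hu

@[simp]
lemma nullSeq_apply {F : Type*} [TopologicalSpace F] [Zero F] (u : ℕ → F)
    (hu : Tendsto u atTop (𝓝 0)) (n : ℕ) : nullSeq u hu n = u n := rfl

lemma tendsto_atTop_zero_of_zeroAtInfty {F : Type*} [TopologicalSpace F] [Zero F] (u : C₀(ℕ, F)) :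
    Tendsto u atTop (𝓝 0) :=
  cocompact_eq_atTop (α := ℕ) ▸ u.zero_at_infty'

variable {𝕜 : Type*} [NontriviallyNormedField 𝕜] {F : Type*} [SeminormedAddCommGroup F]
  [NormedSpace 𝕜 F]

variable (𝕜) in
/-- Evaluation at a point as a continuous linear map on `C₀(α, F)`. -/
def zeroAtInftyEval {α : Type*} [TopologicalSpace α] (x : α) : C₀(α, F) →L[𝕜] F where
  toFun u := u x
  map_add' _ _ := rfl
  map_smul' _ _ := rfl
  cont := (BoundedContinuousFunction.evalCLM 𝕜 x).continuous.comp
    ZeroAtInftyContinuousMap.isometry_toBCF.continuous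

@[simp]
lemma zeroAtInftyEval_apply {α : Type*} [TopologicalSpace α] (x : α) (u : C₀(α, F)) :
    zeroAtInftyEval 𝕜 x u = u x := rfl

variable {X : Type*} [SeminormedAddCommGroup X] [NormedSpace 𝕜 X]

/-- The linear map `x ↦ (A n x)ₙ` into `c₀` given by operators `A n` that tend to zero pointwise. -/
def nullSeqLinearMap (A : ℕ → X →L[𝕜] F) (hA : ∀ x, Tendsto (fun n => A n x) atTop (𝓝 0)) :
    X →ₗ[𝕜] C₀(ℕ, F) where
  toFun x := nullSeq (fun n => A n x) (hA x)
  map_add' x y := by ext n; simp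
  map_smul' c x := by ext n; simp

@[simp]
lemma nullSeqLinearMap_apply (A : ℕ → X →L[𝕜] F) (hA : ∀ x, Tendsto (fun n => A n x) atTop (𝓝 0))
    (x : X) (n : ℕ) : nullSeqLinearMap A hA x n = A n x := rfl

lemma continuous_nullSeqLinearMap [CompleteSpace X] (A : ℕ → X →L[𝕜] F)
    (hA : ∀ x, Tendsto (fun n => A n x) atTop (𝓝 0)) : Continuous (nullSeqLinearMap A hA) := by
  obtain ⟨C, hC⟩ : ∃ C, ∀ n, ‖A n‖ ≤ C := banach_steinhaus fun x =>
    ⟨‖nullSeqLinearMap A hA x‖, (nullSeqLinearMap A hA x).toBCF.norm_coe_le_norm⟩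
  refine AddMonoidHomClass.continuous_of_bound _ C fun x => ?_
  have hC_nonneg : 0 ≤ C := (norm_nonneg _).trans (hC 0)
  exact (BoundedContinuousFunction.norm_le (by positivity)).2 fun n =>
    (A n).le_of_opNorm_le (hC n) x

lemma exists_ne_zero_smul_tendsto_zero [NormedSpace ℝ F] (x : ℕ → F) :
    ∃ c : ℕ → ℝ, (∀ n, c n ≠ 0) ∧ Tendsto (fun n => c n • x n) atTop (𝓝 0) := by
  refine ⟨fun n => 1 / ((n : ℝ) + 1) * (‖x n‖ + 1)⁻¹, fun n => by positivity, ?_⟩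
  refine squeeze_zero_norm (fun n => ?_) (tendsto_one_div_add_atTop_nhds_zero_nat (𝕜 := ℝ))
  calc ‖(1 / ((n : ℝ) + 1) * (‖x n‖ + 1)⁻¹) • x n‖
      = 1 / ((n : ℝ) + 1) * (‖x n‖ / (‖x n‖ + 1)) := by
        rw [norm_smul, Real.norm_of_nonneg (by positivity), mul_assoc, inv_mul_eq_div]
    _ ≤ 1 / ((n : ℝ) + 1) * 1 := by gcongr; exact div_le_one_of_le₀ (by simp) (by positivity)
    _ = 1 / ((n : ℝ) + 1) := mul_one _

end NullSequences

lemma HasSchauderBasis.map {X Y : Type*} [NormedAddCommGroup X] [NormedSpace ℝ X]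
    [NormedAddCommGroup Y] [NormedSpace ℝ Y] (hX : HasSchauderBasis X) (φ : X ≃L[ℝ] Y) :
    HasSchauderBasis Y := by
  obtain ⟨e, f, biorthogonal, hasExpansion⟩ := hX
  refine ⟨fun n => φ (e n), fun n => f n ∘L (φ.symm : Y →L[ℝ] X), by simpa using biorthogonal,
    fun y => ?_⟩
  simpa [Function.comp_def] using (φ.continuous.tendsto _).comp (hasExpansion (φ.symm y))

lemma HasSchauderBasis.exists_isometric_complemented {E : Type u} {Z : Type v}
    [NormedAddCommGroup E] [NormedSpace ℝ E] [CompleteSpace E]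
    [NormedAddCommGroup Z] [NormedSpace ℝ Z] [CompleteSpace Z] (hZ : HasSchauderBasis Z)
    {Q : Z →L[ℝ] E} {T : E →L[ℝ] Z} (hTQ : Function.RightInverse T Q) :
    ∃ W : BanachSpace.{max u v}, HasSchauderBasis W.X ∧
      ∃ J : E →ₗᵢ[ℝ] W.X,
        IsClosed (Set.range J) ∧
        ∃ P : W.X →L[ℝ] W.X, (∀ w, P (P w) = P w) ∧ Set.range P = Set.range J := by
  let J := LinearIsometry.inl ℝ E Q.ker
  exact ⟨⟨E × Q.ker⟩, hZ.map (.equivOfRightInverse Q T hTQ), J,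
    J.isometry.isClosedEmbedding.isClosed_range,
    J.toContinuousLinearMap ∘L .fst ℝ E Q.ker, fun _ => rfl, Prod.fst_surjective.range_comp J⟩

variable {E : Type*} [NormedAddCommGroup E] [NormedSpace ℝ E] {a : ℕ → E} {b : ℕ → E →L[ℝ] ℝ}

namespace IsSchauderFrame

lemma rescale (h : IsSchauderFrame a b) {c : ℕ → ℝ} (hc : ∀ n, c n ≠ 0) :
    IsSchauderFrame (fun n => (c n)⁻¹ • a n) (fun n => c n • b n) := fun x =>
  (h x).congr fun n => Finset.sum_congr rfl fun j _ => by
    rw [smul_apply, smul_comm, smul_eq_mul, mul_smul, inv_smul_smul₀ (hc j)]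

lemma exists_coeff_tendsto_zero (h : IsSchauderFrame a b) :
    ∃ (a' : ℕ → E) (b' : ℕ → E →L[ℝ] ℝ), IsSchauderFrame a' b' ∧
      ∀ x, Tendsto (fun n => b' n x) atTop (𝓝 0) := by
  obtain ⟨c, hc, hcb⟩ := exists_ne_zero_smul_tendsto_zero b
  refine ⟨_, _, h.rescale hc, fun x => ?_⟩
  simpa [Function.comp_def] using
    ((ContinuousLinearMap.apply ℝ ℝ x).continuous.tendsto 0).comp hcb

end IsSchauderFrame

/-- The space of convergent series `∑ c n • a n` with null coefficients, each encoded by the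
sequence `n ↦ (r n, c n)` of its tails and coefficients. Being null, `r` is determined by
`r n - r (n + 1) = c n • a n`. Recording tails rather than partial sums makes the space a
subspace of `c₀`. -/
def tailSpace (a : ℕ → E) : Submodule ℝ C₀(ℕ, E × ℝ) where
  carrier := {u | ∀ n, (u n).1 - (u (n + 1)).1 = (u n).2 • a n}
  zero_mem' n := by simp
  add_mem' {u v} hu hv n := by
    simp [add_smul, ← hu n, ← hv n, add_sub_add_comm]
  smul_mem' c u hu n := by
    simp [mul_smul, ← hu n, smul_sub]

namespace tailSpace

lemma isClosed (a : ℕ → E) : IsClosed (tailSpace a : Set C₀(ℕ, E × ℝ)) := by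
  let eval (n : ℕ) : C₀(ℕ, E × ℝ) →L[ℝ] E × ℝ := zeroAtInftyEval ℝ n
  change IsClosed {u | ∀ n, (eval n u).1 - (eval (n + 1) u).1 = (eval n u).2 • a n}
  rw [Set.ofPred_forall]
  exact isClosed_iInter fun n => isClosed_eq (by fun_prop) (by fun_prop)

instance [CompleteSpace E] : CompleteSpace (tailSpace a) :=
  (isClosed a).completeSpace_coe

variable (a) in
/-- The one-term series `a n`. -/
def basisVec (n : ℕ) : tailSpace a where
  val := nullSeq (fun m => (if m ≤ n then a n else 0, if m = n then 1 else 0)) <|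
    tendsto_const_nhds.congr' <| by
      filter_upwards [eventually_gt_atTop n] with m hm
      simp [hm.not_ge, hm.ne', Prod.mk_zero_zero]
  property m := by
    rcases lt_trichotomy m n with h | rfl | h
    · simp [h.le, h.ne, Nat.succ_le_of_lt h]
    · simp
    · simp [h.not_ge, h.ne', (h.trans m.lt_succ_self).not_ge]

@[simp]
lemma basisVec_apply (n m : ℕ) :
    (basisVec a n : C₀(ℕ, E × ℝ)) m = (if m ≤ n then a n else 0, if m = n then 1 else 0) := rfl

variable (a) in
/-- The `n`-th coefficient of a series, which is the functional biorthogonal to `basisVec a n`. -/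
noncomputable def coeff (n : ℕ) : tailSpace a →L[ℝ] ℝ :=
  .snd ℝ E ℝ ∘L zeroAtInftyEval ℝ n ∘L (tailSpace a).subtypeL

@[simp]
lemma coeff_apply (n : ℕ) (z : tailSpace a) : coeff a n z = (z.1 n).2 := rfl

variable (a) in
/-- The sum of a series, read off as its zeroth tail. -/
noncomputable def sum : tailSpace a →L[ℝ] E :=
  .fst ℝ E ℝ ∘L zeroAtInftyEval ℝ 0 ∘L (tailSpace a).subtypeL

@[simp]
lemma sum_apply (z : tailSpace a) : sum a z = (z.1 0).1 := rfl

lemma sub_partialSum_apply (z : tailSpace a) (n m : ℕ) :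
    z.1 m - (∑ j ∈ Finset.range n, coeff a j z • basisVec a j).1 m =
      if m < n then ((z.1 n).1, 0) else z.1 m := by
  induction n with
  | zero => simp
  | succ n ih =>
    have tail_succ : (z.1 (n + 1)).1 = (z.1 n).1 - (z.1 n).2 • a n := by
      rw [← z.2 n, sub_sub_cancel]
    rw [Finset.sum_range_succ, Submodule.coe_add, ZeroAtInftyContinuousMap.add_apply,
      sub_add_eq_sub_sub, ih]
    rcases lt_trichotomy m n with h | rfl | h
    · simp [h, h.le, h.ne, h.trans n.lt_succ_self, tail_succ]
    · ext <;> simp [tail_succ]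
    · simp [h.not_ge, h.ne', h.not_gt, (Nat.succ_le_of_lt h).not_gt]

lemma tendsto_partialSum (z : tailSpace a) :
    Tendsto (fun n => ∑ j ∈ Finset.range n, coeff a j z • basisVec a j) atTop (𝓝 z) := by
  rw [tendsto_subtype_rng, ZeroAtInftyContinuousMap.tendsto_iff_tendstoUniformly,
    Metric.tendstoUniformly_iff]
  intro ε hε
  have entries_small : ∀ᶠ n in atTop, ∀ k ≥ n, ‖z.1 k‖ < ε :=
    eventually_forall_ge_atTop.2 <|
      (tendsto_atTop_zero_of_zeroAtInfty z.1).norm.eventually_lt_const (by simpa using hε)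
  filter_upwards [entries_small] with n hn m
  rw [dist_eq_norm, sub_partialSum_apply]
  split_ifs with hm
  · simpa [Prod.norm_def] using (norm_fst_le _).trans_lt (hn n le_rfl)
  · exact hn m (not_lt.1 hm)

variable (a) in
lemma hasSchauderBasis : HasSchauderBasis (tailSpace a) :=
  ⟨basisVec a, coeff a, fun _ _ => by simp, tendsto_partialSum⟩

end tailSpace

namespace IsSchauderFrame

variable (a b) in
/-- The operator sending `x` to the `n`-th remainder and coefficient of its frame expansion. -/
noncomputable def remainderCoeff (n : ℕ) : E →L[ℝ] E × ℝ :=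
  (.id ℝ E - ∑ j ∈ Finset.range n, (b j).smulRight (a j)).prod (b n)

@[simp]
lemma remainderCoeff_apply (n : ℕ) (x : E) :
    remainderCoeff a b n x = (x - ∑ j ∈ Finset.range n, b j x • a j, b n x) := by
  simp [remainderCoeff]

lemma tendsto_remainderCoeff (h : IsSchauderFrame a b) {x : E}
    (hb : Tendsto (fun n => b n x) atTop (𝓝 0)) :
    Tendsto (fun n => remainderCoeff a b n x) atTop (𝓝 0) := by
  simpa [Prod.mk_zero_zero] using ((h x).const_sub x).prodMk_nhds hb

variable [CompleteSpace E] (h : IsSchauderFrame a b)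
  (hb : ∀ x, Tendsto (fun n => b n x) atTop (𝓝 0))

/-- The frame expansion `x = ∑ b n x • a n` as an element of `tailSpace a`. -/
noncomputable def expansion : E →L[ℝ] tailSpace a :=
  ContinuousLinearMap.codRestrict
    ⟨nullSeqLinearMap (remainderCoeff a b) fun x => h.tendsto_remainderCoeff (hb x),
      continuous_nullSeqLinearMap _ _⟩
    (tailSpace a) fun x n => by simp [Finset.sum_range_succ]

@[simp]
lemma expansion_apply (x : E) (n : ℕ) :
    (h.expansion hb x : C₀(ℕ, E × ℝ)) n = (x - ∑ j ∈ Finset.range n, b j x • a j, b n x) :=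
  remainderCoeff_apply n x

lemma rightInverse_expansion_sum :
    Function.RightInverse (h.expansion hb) (tailSpace.sum a) := fun x => by
  simp

end IsSchauderFrame

/-- If a separable Banach space `E` has a Schauder frame, then there is a Banach space
`Z` with a Schauder basis and a linear isometry `T : E → Z` whose range is a closed
complemented subspace of `Z`. -/
theorem schauderFrame_implies_isometric_complemented_in_basis_space
    {E : Type u} [NormedAddCommGroup E] [NormedSpace ℝ E] [CompleteSpace E]
    [TopologicalSpace.SeparableSpace E]
    (a : ℕ → E) (b : ℕ → E →L[ℝ] ℝ) (h : IsSchauderFrame a b) :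
    ∃ Z : BanachSpace.{u}, HasSchauderBasis Z.X ∧
      ∃ T : E →ₗᵢ[ℝ] Z.X,
        IsClosed (Set.range T) ∧
        ∃ P : Z.X →L[ℝ] Z.X, (∀ z, P (P z) = P z) ∧ Set.range P = Set.range T := by
  obtain ⟨a', b', h', hb'⟩ := h.exists_coeff_tendsto_zero
  exact (tailSpace.hasSchauderBasis a').exists_isometric_complemented
    (h'.rightInverse_expansion_sum hb')
end

section
/- Let E be a separable Banach space. If there exist a Banach space Z with a Schauder basis, a closed complemented subspace F of Z, and a continuous linear isomorphism (bounded bijection with bounded inverse) from E onto F, then E has a Schauder frame. -/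
open Filter Topology

section

variable {E Z : Type*} [NormedAddCommGroup E] [NormedSpace ℝ E]
  [NormedAddCommGroup Z] [NormedSpace ℝ Z] {u : ℕ → Z} {f : ℕ → Z →L[ℝ] ℝ}

theorem IsSchauderFrame.of_leftInverse (h : IsSchauderFrame u f)
    {J : E →L[ℝ] Z} {Q : Z →L[ℝ] E} (hQJ : Function.LeftInverse Q J) :
    IsSchauderFrame (fun n => Q (u n)) (fun n => f n ∘L J) := by
  intro x
  have tendsto_image :
      Tendsto (fun n => Q (∑ j ∈ Finset.range n, f j (J x) • u j)) atTop (𝓝 (Q (J x))) :=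
    (Q.continuous.tendsto (J x)).comp (h (J x))
  simpa only [map_sum, map_smul, hQJ x, ContinuousLinearMap.comp_apply] using tendsto_image

theorem schauderFrame_of_complemented_in_basis_space_general (h : IsSchauderFrame u f)
    {F : Submodule ℝ Z} (hF : F.ClosedComplemented) (e : E ≃L[ℝ] F) :
    ∃ (a : ℕ → E) (b : ℕ → E →L[ℝ] ℝ), IsSchauderFrame a b := by
  obtain ⟨p, hp⟩ := hF
  have hQJ : Function.LeftInverse ((e.symm : F →L[ℝ] E) ∘L p)
      (F.subtypeL ∘L (e : E →L[ℝ] F)) := fun x => by simp [hp]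
  exact ⟨_, _, h.of_leftInverse hQJ⟩

end

/-- If a separable Banach space `E` is isomorphic, via a continuous linear isomorphism,
to a closed complemented subspace `F` of a Banach space `Z` having a Schauder basis,
then `E` has a Schauder frame. -/
theorem schauderFrame_of_complemented_in_basis_space
    {E : Type*} [NormedAddCommGroup E] [NormedSpace ℝ E] [CompleteSpace E]
    [TopologicalSpace.SeparableSpace E]
    (Z : Type*) [NormedAddCommGroup Z] [NormedSpace ℝ Z] [CompleteSpace Z]
    (hZ : HasSchauderBasis Z)
    (F : Submodule ℝ Z) (hF : IsClosed (F : Set Z))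
    (P : Z →L[ℝ] Z) (hP : ∀ z, P (P z) = P z)
    (hrange : LinearMap.range (P : Z →ₗ[ℝ] Z) = F)
    (e : E ≃L[ℝ] F) :
    ∃ (a : ℕ → E) (b : ℕ → E →L[ℝ] ℝ), IsSchauderFrame a b := by
  obtain ⟨u, f, -, hf⟩ := hZ
  have hPidem : IsIdempotentElem P := ContinuousLinearMap.ext hP
  have hFcompl : F.ClosedComplemented :=
    hrange ▸ (ContinuousLinearMap.IsIdempotentElem.isTopCompl hPidem).closedComplemented
  exact schauderFrame_of_complemented_in_basis_space_general hf hFcompl e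
end

section
/- There exists a separable Banach space B with a Schauder basis such that for every separable Banach space E: E has a Schauder frame if and only if E is isomorphic (via a continuous linear isomorphism with continuous inverse) to a closed complemented subspace of B. -/
open Filter Topology

universe u

/-!
Write `C` for the space of continuous functions on the Cantor set, which by Banach–Mazur contains an
isometric copy of every separable normed space, and let `D` be a dense sequence in `C`. Consider the
tree of finite sequences of natural numbers, where a step along the edge `n` is labelled by `D n`.
Attach a basis vector to every node, and let the norm of a finitely supported family of scalars be
the larger of its supremum and the supremum, over all nodes, of the norm of the sum of the labels,
weighted by the scalars, on the way from the root to that node. Restricting a family to a subtree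
does not increase the norm, so the nodes, enumerated with parents before children, form a
(monotone) Schauder basis of the completion.

Now let `(a, b)` be a Schauder frame of `E ⊆ C`, rescaled so that `‖b n‖ ≤ 2⁻ⁿ`, and follow the
infinite branch whose `n`-th label is within `2⁻ⁿ` of `a n`. Along this branch a series in the basis
converges as soon as the labelled series does and its coefficients tend to `0`, so
`x ↦ ∑ b n x • e n` embeds `E`, and summing the coefficients against `a n` gives a left inverse.
-/

section BoundedOperators

variable {𝕜 X Y : Type*} [NontriviallyNormedField 𝕜] [NormedAddCommGroup X] [NormedSpace 𝕜 X]
  [NormedAddCommGroup Y] [NormedSpace 𝕜 Y]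

theorem tendsto_of_dense_span {ι : Type*} {l : Filter ι} {S : ι → X →L[𝕜] Y} {R : X →L[𝕜] Y}
    {C : ℝ} (hS : ∀ n z, ‖S n z‖ ≤ C * ‖z‖) {A : Set X}
    (hA : Dense (Submodule.span 𝕜 A : Set X)) (h : ∀ x ∈ A, Tendsto (fun n => S n x) l (𝓝 (R x)))
    (z : X) : Tendsto (fun n => S n z) l (𝓝 (R z)) := by
  have hbdd : ∃ C, ∀ n z, ‖S n z‖ ≤ C * ‖z‖ := ⟨C, hS⟩
  have hequi : Equicontinuous ((↑) ∘ S : ι → X → Y) :=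
    ((NormedSpace.equicontinuous_TFAE S).out 3 1).1 hbdd
  have hspan : ∀ y ∈ Submodule.span 𝕜 A, Tendsto (fun n => S n y) l (𝓝 (R y)) := by
    intro y hy
    induction hy using Submodule.span_induction with
    | mem x hx => exact h x hx
    | zero => simp only [map_zero, tendsto_const_nhds]
    | add x y _ _ hx hy => simpa only [map_add] using hx.add hy
    | smul c x _ hx => simpa only [map_smul] using hx.const_smul c
  exact (hequi.isClosed_setOfPred_tendsto R.continuous).closure_subset_iff.2 hspan (hA z)

theorem cauchySeq_of_dense_span {S : ℕ → X →L[𝕜] Y} {C : ℝ} (hS : ∀ n z, ‖S n z‖ ≤ C * ‖z‖)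
    {A : Set X} (hA : Dense (Submodule.span 𝕜 A : Set X))
    (h : ∀ x ∈ A, CauchySeq fun n => S n x) (z : X) : CauchySeq fun n => S n z := by
  have cauchySeq_iff (x : X) : (CauchySeq fun n => S n x) ↔
      Tendsto (fun m : ℕ × ℕ => (S m.1 - S m.2) x) atTop (𝓝 ((0 : X →L[𝕜] Y) x)) := by
    simp only [cauchySeq_iff_tendsto_dist_atTop_0, dist_eq_norm, sub_apply, zero_apply,
      tendsto_zero_iff_norm_tendsto_zero (f := fun m : ℕ × ℕ => S m.1 x - S m.2 x)]
  refine (cauchySeq_iff z).2 (tendsto_of_dense_span (C := C + C) (fun m x => ?_) hA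
    (fun x hx => (cauchySeq_iff x).1 (h x hx)) z)
  calc ‖S m.1 x - S m.2 x‖ ≤ ‖S m.1 x‖ + ‖S m.2 x‖ := norm_sub_le _ _
    _ ≤ C * ‖x‖ + C * ‖x‖ := add_le_add (hS _ _) (hS _ _)
    _ = (C + C) * ‖x‖ := by ring

theorem exists_continuousLinearMap_tendsto [CompleteSpace X] [CompleteSpace Y]
    {S : ℕ → X →L[𝕜] Y} (h : ∀ z, CauchySeq fun n => S n z) :
    ∃ R : X →L[𝕜] Y, ∀ z, Tendsto (fun n => S n z) atTop (𝓝 (R z)) := by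
  choose g hg using fun z => cauchySeq_tendsto_of_complete (h z)
  exact ⟨continuousLinearMapOfTendsto S (f := g) (tendsto_pi_nhds.2 hg), hg⟩

end BoundedOperators

theorem exists_hasLeftInverse_iff_exists_complemented {R E B : Type*} [Ring R]
    [AddCommGroup E] [TopologicalSpace E] [Module R E] [AddCommGroup B] [TopologicalSpace B]
    [IsTopologicalAddGroup B] [T1Space B] [Module R B] :
    (∃ J : E →L[R] B, J.HasLeftInverse) ↔
      ∃ F : Submodule R B, IsClosed (F : Set B) ∧
        (∃ P : B →L[R] B, (∀ z, P (P z) = P z) ∧ LinearMap.range (P : B →ₗ[R] B) = F) ∧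
        Nonempty (E ≃L[R] F) := by
  constructor
  · rintro ⟨J, Q, hQJ⟩
    have hP (z : B) : (J ∘L Q) ((J ∘L Q) z) = (J ∘L Q) z := congrArg J (hQJ (Q z))
    have hJ (x : E) : J x ∈ (J ∘L Q).range := ⟨J x, congrArg J (hQJ x)⟩
    refine ⟨_, ContinuousLinearMap.IsIdempotentElem.isClosed_range (ContinuousLinearMap.ext hP),
      ⟨_, hP, rfl⟩, ⟨.equivOfInverse (J.codRestrict _ hJ) (Q ∘L Submodule.subtypeL _) hQJ ?_⟩⟩
    rintro ⟨_, w, rfl⟩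
    exact Subtype.ext (hP w)
  · rintro ⟨F, -, ⟨P, hP, rfl⟩, ⟨φ⟩⟩
    have hF : (Submodule.subtypeL (LinearMap.range (P : B →ₗ[R] B))).HasLeftInverse := by
      refine ⟨P.rangeRestrict, ?_⟩
      rintro ⟨_, w, rfl⟩
      exact Subtype.ext (hP w)
    exact ⟨_, hF.comp φ.hasLeftInverse⟩

section BanachMazur

variable {𝕜 E : Type*} [RCLike 𝕜] [NormedAddCommGroup E] [NormedSpace 𝕜 E]

theorem nonempty_linearIsometry_of_range_eq_closedBall {K : Type*} [TopologicalSpace K]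
    [CompactSpace K] {g : K → WeakDual 𝕜 E} (hg : Continuous g)
    (hrange : Set.range g = WeakDual.toStrongDual ⁻¹' Metric.closedBall 0 1) :
    Nonempty (E →ₗᵢ[𝕜] C(K, 𝕜)) := by
  let eval : E →ₗ[𝕜] C(K, 𝕜) :=
    { toFun := fun x => ⟨fun t => g t x, (WeakDual.eval_continuous x).comp hg⟩
      map_add' := fun x y => by ext t; exact map_add (g t) x y
      map_smul' := fun c x => by ext t; exact map_smul (g t) c x }
  refine ⟨⟨eval, fun x => le_antisymm ?_ ?_⟩⟩
  · refine (ContinuousMap.norm_le _ (norm_nonneg x)).2 fun t => ?_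
    have hgt : ‖WeakDual.toStrongDual (g t)‖ ≤ 1 :=
      mem_closedBall_zero_iff.1 (hrange.le ⟨t, rfl⟩)
    simpa only [one_mul] using! (WeakDual.toStrongDual (g t)).le_of_opNorm_le hgt x
  · obtain ⟨f, hf, hfx⟩ := exists_dual_vector'' 𝕜 x
    obtain ⟨t, ht⟩ : StrongDual.toWeakDual f ∈ Set.range g :=
      hrange.ge (mem_closedBall_zero_iff.2 hf)
    have heval : eval x t = ‖x‖ := (congrArg (fun φ : WeakDual 𝕜 E => φ x) ht).trans hfx
    simpa only [heval, RCLike.norm_ofReal, abs_norm] using (eval x).norm_coe_le_norm t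

theorem nonempty_linearIsometry_continuousMap_cantor (𝕜 E : Type*) [RCLike 𝕜]
    [NormedAddCommGroup E] [NormedSpace 𝕜 E] [TopologicalSpace.SeparableSpace E] :
    Nonempty (E →ₗᵢ[𝕜] C(ℕ → Bool, 𝕜)) := by
  let S : Set (WeakDual 𝕜 E) := WeakDual.toStrongDual ⁻¹' Metric.closedBall 0 1
  have hS : IsCompact S := WeakDual.isCompact_closedBall 0 1
  have : TopologicalSpace.MetrizableSpace S := WeakDual.metrizable_of_isCompact 𝕜 E S hS
  let : MetricSpace S := TopologicalSpace.metrizableSpaceMetric S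
  have : CompactSpace S := isCompact_iff_compactSpace.mp hS
  have : Nonempty S := ⟨⟨0, by simp [S]⟩⟩
  obtain ⟨g, hg, hgsurj⟩ := exists_nat_bool_continuous_surjective_of_compact S
  refine nonempty_linearIsometry_of_range_eq_closedBall (continuous_subtype_val.comp hg) ?_
  rw [Set.range_comp, hgsurj.range_eq, Set.image_univ, Subtype.range_coe]

end BanachMazur

section SchauderFrame

variable {X Y : Type*} [NormedAddCommGroup X] [NormedSpace ℝ X] [NormedAddCommGroup Y]
  [NormedSpace ℝ Y] {a : ℕ → X} {b : ℕ → X →L[ℝ] ℝ}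

theorem IsSchauderFrame.separableSpace (h : IsSchauderFrame a b) :
    TopologicalSpace.SeparableSpace X := by
  have hdense : Dense (Submodule.span ℝ (Set.range a) : Set X) := fun x =>
    mem_closure_of_tendsto (h x) <| Eventually.of_forall fun _ => Submodule.sum_mem _ fun j _ =>
      Submodule.smul_mem _ _ (Submodule.subset_span ⟨j, rfl⟩)
  have hsep := ((Set.countable_range a).isSeparable.span (R := ℝ)).closure
  rw [hdense.closure_eq] at hsep
  exact TopologicalSpace.isSeparable_univ_iff.1 hsep

theorem IsSchauderFrame.comp_leftInverse (h : IsSchauderFrame a b) {J : Y →L[ℝ] X}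
    {Q : X →L[ℝ] Y} (hQJ : Function.LeftInverse Q J) :
    IsSchauderFrame (fun n => Q (a n)) (fun n => b n ∘L J) := by
  intro y
  have hlim := (Q.continuous.tendsto _).comp (h (J y))
  simpa only [hQJ y, Function.comp_def, map_sum, map_smul] using! hlim

theorem IsSchauderFrame.smul_inv_smul (h : IsSchauderFrame a b) {c : ℕ → ℝ} (hc : ∀ n, c n ≠ 0) :
    IsSchauderFrame (fun n => c n • a n) (fun n => (c n)⁻¹ • b n) := by
  intro x
  refine (h x).congr fun N => Finset.sum_congr rfl fun n _ => ?_
  rw [smul_apply, smul_eq_mul, smul_smul, mul_right_comm, inv_mul_cancel₀ (hc n), one_mul]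

theorem IsSchauderFrame.exists_norm_le (h : IsSchauderFrame a b) {ε : ℕ → ℝ} (hε : ∀ n, 0 < ε n) :
    ∃ (a' : ℕ → X) (b' : ℕ → X →L[ℝ] ℝ), IsSchauderFrame a' b' ∧ ∀ n, ‖b' n‖ ≤ ε n := by
  have hpos (n : ℕ) : 0 < (‖b n‖ + 1) / ε n := div_pos (by positivity) (hε n)
  refine ⟨_, _, h.smul_inv_smul fun n => (hpos n).ne', fun n => ?_⟩
  rw [norm_smul, norm_inv, Real.norm_of_nonneg (hpos n).le, inv_mul_le_iff₀ (hpos n),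
    div_mul_cancel₀ _ (hε n).ne']
  exact (lt_add_one _).le

theorem HasSchauderBasis.exists_isSchauderFrame (h : HasSchauderBasis X) :
    ∃ (a : ℕ → X) (b : ℕ → X →L[ℝ] ℝ), IsSchauderFrame a b :=
  let ⟨e, f, _, hef⟩ := h
  ⟨e, f, hef⟩

theorem hasSchauderBasis_of_norm_sum_le {e : ℕ → X} {f : ℕ → X →L[ℝ] ℝ} {C : ℝ}
    (hbiorth : ∀ i j, f i (e j) = if i = j then 1 else 0)
    (hdense : Dense (Submodule.span ℝ (Set.range e) : Set X))
    (hbound : ∀ N z, ‖∑ j ∈ Finset.range N, f j z • e j‖ ≤ C * ‖z‖) : HasSchauderBasis X := by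
  let S (N : ℕ) : X →L[ℝ] X := ∑ j ∈ Finset.range N, (f j).smulRight (e j)
  have hS (N : ℕ) (z : X) : S N z = ∑ j ∈ Finset.range N, f j z • e j := by
    simp only [S, sum_apply, ContinuousLinearMap.smulRight_apply]
  simp only [← hS] at hbound
  refine ⟨e, f, hbiorth, fun z => ?_⟩
  simp only [← hS]
  refine tendsto_of_dense_span (R := .id ℝ X) hbound hdense ?_ z
  rintro _ ⟨i, rfl⟩
  refine tendsto_atTop_of_eventually_const (i₀ := i + 1) fun N hN => ?_
  simp only [hS, hbiorth, ite_smul, one_smul, zero_smul, Finset.sum_ite_eq', Finset.mem_range,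
    if_pos (Nat.lt_of_succ_le hN), ContinuousLinearMap.id_apply]

end SchauderFrame

section Tree

open scoped ENNReal

variable {ι W : Type*} [DecidableEq ι] [NormedAddCommGroup W] [NormedSpace ℝ W]

/-- The basis vector at the node `s` of the tree whose edges are labelled by `D : ι → W`. A node is
the list of the edges leading to it, the last one first, so that its ancestors are its suffixes and
`s.head?.elim 0 D` is the label of the last edge (`0` at the root). A family of scalars
on the nodes is encoded by recording at each node `t` the sum of the labels on the way to `t`,
weighted by the scalars, together with the scalar at `t`. -/
def treeVector (D : ι → W) (s : List ι) : lp (fun _ : List ι => W × ℝ) ∞ :=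
  ⟨fun t => (if s <:+ t then s.head?.elim 0 D else 0, if t = s then 1 else 0), by
    refine memℓp_infty ⟨max ‖s.head?.elim 0 D‖ 1, ?_⟩
    rintro _ ⟨t, rfl⟩
    exact max_le_max (by split_ifs <;> simp) (by split_ifs <;> simp)⟩

/-- The tree space of a labelling `D` of the edges of the `ι`-branching tree: the closed linear span
of the vectors `treeVector D s`. -/
abbrev TreeSpace (D : ι → W) : Type _ :=
  (Submodule.span ℝ (Set.range (treeVector D))).topologicalClosure

namespace TreeSpace

variable {D : ι → W}

/-- The vector at the node `s`, as an element of the tree space. -/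
def basisVector (D : ι → W) (s : List ι) : TreeSpace D :=
  ⟨treeVector D s, Submodule.le_topologicalClosure _ (Submodule.subset_span ⟨s, rfl⟩)⟩

/-- The functional reading off the scalar at the node `t`. -/
noncomputable def coord (t : List ι) : TreeSpace D →L[ℝ] ℝ :=
  .snd ℝ W ℝ ∘L lp.evalCLM ℝ (fun _ : List ι => W × ℝ) ∞ t ∘L Submodule.subtypeL _

/-- The operator reading off the weighted sum of the labels on the way from the root to `t`. -/
noncomputable def branchSum (t : List ι) : TreeSpace D →L[ℝ] W :=
  .fst ℝ W ℝ ∘L lp.evalCLM ℝ (fun _ : List ι => W × ℝ) ∞ t ∘L Submodule.subtypeL _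

theorem coord_basisVector (s t : List ι) :
    coord s (basisVector D t) = if s = t then 1 else 0 := rfl

theorem branchSum_basisVector (s t : List ι) :
    branchSum s (basisVector D t) = if t <:+ s then t.head?.elim 0 D else 0 := rfl

theorem norm_coord_le (t : List ι) (z : TreeSpace D) : ‖coord t z‖ ≤ ‖z‖ :=
  (le_max_right _ _).trans (lp.norm_apply_le_norm ENNReal.top_ne_zero z.1 t)

theorem norm_branchSum_le (t : List ι) (z : TreeSpace D) : ‖branchSum t z‖ ≤ ‖z‖ :=
  (le_max_left _ _).trans (lp.norm_apply_le_norm ENNReal.top_ne_zero z.1 t)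

theorem dense_span_range_basisVector :
    Dense (Submodule.span ℝ (Set.range (basisVector D)) : Set (TreeSpace D)) := by
  have himage : ((↑) : TreeSpace D → lp (fun _ : List ι => W × ℝ) ∞) ''
      Submodule.span ℝ (Set.range (basisVector D)) =
        Submodule.span ℝ (Set.range (treeVector D)) := by
    rw [← Submodule.coe_subtype, ← Submodule.map_coe, Submodule.map_span, ← Set.range_comp]
    rfl
  exact Subtype.dense_iff.2 (congrArg closure himage).ge

theorem continuousLinearMap_ext {Y : Type*} [NormedAddCommGroup Y] [NormedSpace ℝ Y]
    {S T : TreeSpace D →L[ℝ] Y} (h : ∀ s, S (basisVector D s) = T (basisVector D s)) : S = T :=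
  ContinuousLinearMap.ext_on dense_span_range_basisVector (Set.forall_mem_range.2 h)

theorem branchSum_nil (z : TreeSpace D) : branchSum [] z = 0 := by
  suffices branchSum (D := D) [] = 0 from congr($this z)
  refine continuousLinearMap_ext fun s => ?_
  cases s <;> simp [branchSum_basisVector]

theorem branchSum_cons (a : ι) (l : List ι) (z : TreeSpace D) :
    branchSum (a :: l) z = branchSum l z + coord (a :: l) z • D a := by
  suffices branchSum (a :: l) = branchSum l + (coord (a :: l)).smulRight (D a) from congr($this z)
  refine continuousLinearMap_ext fun s => ?_
  simp only [add_apply, ContinuousLinearMap.smulRight_apply, branchSum_basisVector,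
    coord_basisVector, List.suffix_cons_iff]
  rcases eq_or_ne s (a :: l) with rfl | hs
  · have hnot : ¬ a :: l <:+ l := fun h => (Nat.lt_succ_self _).not_ge h.length_le
    simp [hnot]
  · simp [hs, hs.symm]

theorem norm_le_of_coord_ne_zero {z : TreeSpace D} {C : ℝ} (hC : 0 ≤ C)
    (h : ∀ t, coord t z ≠ 0 → ‖branchSum t z‖ ≤ C ∧ ‖coord t z‖ ≤ C) : ‖z‖ ≤ C := by
  have hcoord (t : List ι) : ‖coord t z‖ ≤ C := by
    by_cases ht : coord t z = 0
    · rwa [ht, norm_zero]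
    · exact (h t ht).2
  have hbranch (t : List ι) : ‖branchSum t z‖ ≤ C := by
    induction t with
    | nil => rwa [branchSum_nil, norm_zero]
    | cons a l ih =>
      by_cases ht : coord (a :: l) z = 0
      · rwa [branchSum_cons, ht, zero_smul, add_zero]
      · exact (h _ ht).1
  exact lp.norm_le_of_forall_le (f := z.1) hC fun t => max_le (hbranch t) (hcoord t)

theorem coord_sum_smul_basisVector {κ : Type*} [DecidableEq κ] (A : Finset κ) (c : κ → ℝ)
    {s : κ → List ι} (hs : Function.Injective s) (m : κ) :
    coord (s m) (∑ n ∈ A, c n • basisVector D (s n)) = if m ∈ A then c m else 0 := by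
  simp only [map_sum, map_smul, coord_basisVector, hs.eq_iff, smul_eq_mul, mul_ite, mul_one,
    mul_zero, Finset.sum_ite_eq]

theorem exists_of_coord_sum_smul_basisVector_ne_zero {κ : Type*} {A : Finset κ} {c : κ → ℝ}
    {s : κ → List ι} {t : List ι} (h : coord t (∑ n ∈ A, c n • basisVector D (s n)) ≠ 0) :
    ∃ n ∈ A, t = s n := by
  simp only [map_sum, map_smul, coord_basisVector] at h
  obtain ⟨n, hn, hne⟩ := Finset.exists_ne_zero_of_sum_ne_zero h
  exact ⟨n, hn, by simpa using right_ne_zero_of_smul hne⟩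

theorem norm_sum_coord_smul_basisVector_le {A : Finset (List ι)}
    (hA : ∀ a l, a :: l ∈ A → l ∈ A) (z : TreeSpace D) :
    ‖∑ s ∈ A, coord s z • basisVector D s‖ ≤ ‖z‖ := by
  set y := ∑ s ∈ A, coord s z • basisVector D s
  have hcoord : ∀ t ∈ A, coord t y = coord t z := fun t ht =>
    (coord_sum_smul_basisVector A _ Function.injective_id t).trans (if_pos ht)
  have hbranch : ∀ t ∈ A, branchSum t y = branchSum t z := by
    intro t ht
    induction t with
    | nil => rw [branchSum_nil, branchSum_nil]
    | cons a l ih => rw [branchSum_cons, branchSum_cons, ih (hA a l ht), hcoord _ ht]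
  refine norm_le_of_coord_ne_zero (norm_nonneg z) fun t ht => ?_
  obtain ⟨_, htA, rfl⟩ := exists_of_coord_sum_smul_basisVector_ne_zero ht
  rw [hbranch _ htA, hcoord _ htA]
  exact ⟨norm_branchSum_le t z, norm_coord_le t z⟩

theorem encode_lt_encode_cons {α : Type*} [Encodable α] (a : α) (l : List α) :
    Encodable.encode l < Encodable.encode (a :: l) := by
  rw [Encodable.encode_list_cons]
  exact Nat.lt_succ_of_le (Nat.right_le_pair _ _)

theorem hasSchauderBasis [Denumerable ι] (D : ι → W) : HasSchauderBasis (TreeSpace D) := by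
  let enum := Denumerable.ofNat (List ι)
  have enum_injective : Function.Injective enum := (Denumerable.eqv (List ι)).symm.injective
  have enum_surjective : Function.Surjective enum := (Denumerable.eqv (List ι)).symm.surjective
  refine hasSchauderBasis_of_norm_sum_le (e := fun n => basisVector D (enum n))
    (f := fun n => coord (enum n)) (C := 1) (fun i j => ?_) ?_ (fun N z => ?_)
  · simp only [coord_basisVector, enum_injective.eq_iff]
  · exact (enum_surjective.range_comp (basisVector D)).symm ▸ dense_span_range_basisVector
  · have htail (a : ι) (l : List ι) (h : a :: l ∈ (Finset.range N).image enum) :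
        l ∈ (Finset.range N).image enum := by
      obtain ⟨n, hn, hnl⟩ := Finset.mem_image.1 h
      have hencode : Encodable.encode (a :: l) = n := by rw [← hnl, Denumerable.encode_ofNat]
      refine Finset.mem_image.2 ⟨Encodable.encode l, Finset.mem_range.2 ?_,
        Denumerable.ofNat_encode l⟩
      exact (encode_lt_encode_cons a l).trans (hencode.trans_lt (Finset.mem_range.1 hn))
    rw [one_mul, ← Finset.sum_image (f := fun s => coord s z • basisVector D s)
      enum_injective.injOn]
    exact norm_sum_coord_smul_basisVector_le htail z

/-- The node reached after `n` steps along the infinite branch with edges `k 0, k 1, …`. -/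
def branchNode (k : ℕ → ι) : ℕ → List ι
  | 0 => []
  | n + 1 => k n :: branchNode k n

omit [DecidableEq ι] in
theorem length_branchNode (k : ℕ → ι) (n : ℕ) : (branchNode k n).length = n := by
  induction n with
  | zero => rfl
  | succ n ih => rw [branchNode, List.length_cons, ih]

omit [DecidableEq ι] in
theorem branchNode_succ_injective (k : ℕ → ι) :
    Function.Injective fun n => branchNode k (n + 1) := by
  intro m n h
  simpa only [length_branchNode, Nat.add_right_cancel_iff] using congrArg List.length h

theorem branchSum_branchNode (k : ℕ → ι) (m : ℕ) (z : TreeSpace D) :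
    branchSum (branchNode k m) z =
      ∑ n ∈ Finset.range m, coord (branchNode k (n + 1)) z • D (k n) := by
  induction m with
  | zero => exact branchSum_nil z
  | succ m ih =>
    rw [Finset.sum_range_succ, ← ih]
    exact branchSum_cons _ _ _

theorem norm_sum_Ico_smul_basisVector_branchNode_le (k : ℕ → ι) {c : ℕ → ℝ} {M : ℕ} {C : ℝ}
    (hc : ∀ n, M ≤ n → ‖c n‖ ≤ C)
    (hcD : ∀ n, M ≤ n → ‖∑ j ∈ Finset.Ico M n, c j • D (k j)‖ ≤ C) (N : ℕ) :
    ‖∑ n ∈ Finset.Ico M N, c n • basisVector D (branchNode k (n + 1))‖ ≤ C := by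
  have hcoord := coord_sum_smul_basisVector (D := D) (Finset.Ico M N) c
    (branchNode_succ_injective k)
  refine norm_le_of_coord_ne_zero ((norm_nonneg _).trans (hc M le_rfl)) fun t ht => ?_
  obtain ⟨m, hm, rfl⟩ := exists_of_coord_sum_smul_basisVector_ne_zero ht
  obtain ⟨hMm, hmN⟩ := Finset.mem_Ico.1 hm
  have hfilter : {n ∈ Finset.range (m + 1) | n ∈ Finset.Ico M N} = Finset.Ico M (m + 1) := by
    ext n
    simp only [Finset.mem_filter, Finset.mem_range, Finset.mem_Ico]
    lia
  constructor
  · simp only [branchSum_branchNode, hcoord, ite_smul, zero_smul, ← Finset.sum_filter, hfilter]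
    exact hcD _ (Nat.le_succ_of_le hMm)
  · rw [hcoord, if_pos hm]
    exact hc m hMm

theorem cauchySeq_sum_smul_basisVector_branchNode (k : ℕ → ι) {c : ℕ → ℝ}
    (hc : Tendsto c atTop (𝓝 0))
    (hcD : CauchySeq fun N => ∑ n ∈ Finset.range N, c n • D (k n)) :
    CauchySeq fun N => ∑ n ∈ Finset.range N, c n • basisVector D (branchNode k (n + 1)) := by
  refine Metric.cauchySeq_iff'.2 fun ε hε => ?_
  obtain ⟨M₁, hM₁⟩ := Metric.tendsto_atTop.1 hc (ε / 2) (half_pos hε)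
  obtain ⟨M₂, hM₂⟩ := Metric.cauchySeq_iff.1 hcD (ε / 2) (half_pos hε)
  refine ⟨max M₁ M₂, fun N hN => ?_⟩
  rw [dist_eq_norm, ← Finset.sum_Ico_eq_sub _ hN]
  refine (norm_sum_Ico_smul_basisVector_branchNode_le k (fun n hn => ?_) (fun n hn => ?_)
    N).trans_lt (half_lt_self hε)
  · simpa only [dist_zero_right] using (hM₁ n (le_of_max_le_left hn)).le
  · rw [Finset.sum_Ico_eq_sub _ hn, ← dist_eq_norm]
    exact (hM₂ n (le_of_max_le_right hn) _ (le_max_right _ _)).le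

section Frame

variable {E : Type*} [NormedAddCommGroup E] [NormedSpace ℝ E] [CompleteSpace E]
  {k : ℕ → ι} {a : ℕ → E} {b : ℕ → E →L[ℝ] ℝ} {i : E →ₗᵢ[ℝ] W}

theorem exists_analysis_operator [CompleteSpace W] (hab : IsSchauderFrame a b)
    (hb : ∀ x, Tendsto (fun n => b n x) atTop (𝓝 0))
    (hk : Summable fun n => ‖i (a n) - D (k n)‖) :
    ∃ J : E →L[ℝ] TreeSpace D, ∀ x, Tendsto
      (fun N => ∑ n ∈ Finset.range N, b n x • basisVector D (branchNode k (n + 1)))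
      atTop (𝓝 (J x)) := by
  have cauchySeq_frame (x : E) : CauchySeq fun N => ∑ n ∈ Finset.range N, b n x • i (a n) := by
    simpa only [Function.comp_def, map_sum, map_smul] using!
      ((i.continuous.tendsto _).comp (hab x)).cauchySeq
  have cauchySeq_error (x : E) :
      CauchySeq fun N => ∑ n ∈ Finset.range N, b n x • (D (k n) - i (a n)) := by
    obtain ⟨C, hC⟩ := (hb x).norm.bddAbove_range
    refine (Summable.of_norm_bounded (hk.mul_left C) fun n => ?_).hasSum.tendsto_sum_nat.cauchySeq
    rw [norm_smul, norm_sub_rev]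
    gcongr
    exact hC ⟨n, rfl⟩
  have cauchySeq_label (x : E) : CauchySeq fun N => ∑ n ∈ Finset.range N, b n x • D (k n) := by
    have hadd := CauchySeq.add (cauchySeq_frame x) (cauchySeq_error x)
    simpa only [Pi.add_def, ← Finset.sum_add_distrib, ← smul_add, add_sub_cancel] using hadd
  let S (N : ℕ) : E →L[ℝ] TreeSpace D :=
    ∑ n ∈ Finset.range N, (b n).smulRight (basisVector D (branchNode k (n + 1)))
  have hS (N : ℕ) (x : E) :
      S N x = ∑ n ∈ Finset.range N, b n x • basisVector D (branchNode k (n + 1)) := by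
    simp only [S, sum_apply, ContinuousLinearMap.smulRight_apply]
  simp only [← hS]
  refine exists_continuousLinearMap_tendsto fun x => ?_
  simpa only [hS] using cauchySeq_sum_smul_basisVector_branchNode k (hb x) (cauchySeq_label x)

omit [CompleteSpace E] in
theorem norm_sum_coord_branchNode_smul_le (hk : Summable fun n => ‖i (a n) - D (k n)‖)
    (N : ℕ) (z : TreeSpace D) :
    ‖∑ n ∈ Finset.range N, coord (branchNode k (n + 1)) z • a n‖ ≤
      (1 + ∑' n, ‖i (a n) - D (k n)‖) * ‖z‖ := by
  set error := ∑ n ∈ Finset.range N, coord (branchNode k (n + 1)) z • (i (a n) - D (k n))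
    with herror_def
  have hsplit : i (∑ n ∈ Finset.range N, coord (branchNode k (n + 1)) z • a n) =
      branchSum (branchNode k N) z + error := by
    simp only [herror_def, branchSum_branchNode, ← Finset.sum_add_distrib, ← smul_add,
      add_sub_cancel, map_sum, map_smul]
  have herror : ‖error‖ ≤ (∑' n, ‖i (a n) - D (k n)‖) * ‖z‖ :=
    calc ‖error‖ ≤ ∑ n ∈ Finset.range N, ‖i (a n) - D (k n)‖ * ‖z‖ := by
          refine norm_sum_le_of_le _ fun n _ => ?_
          rw [norm_smul, mul_comm]
          gcongr
          exact norm_coord_le _ z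
      _ = (∑ n ∈ Finset.range N, ‖i (a n) - D (k n)‖) * ‖z‖ := (Finset.sum_mul ..).symm
      _ ≤ (∑' n, ‖i (a n) - D (k n)‖) * ‖z‖ := by
          gcongr
          exact hk.sum_le_tsum _ fun n _ => norm_nonneg _
  calc ‖∑ n ∈ Finset.range N, coord (branchNode k (n + 1)) z • a n‖
      = ‖branchSum (branchNode k N) z + error‖ := by rw [← hsplit, i.norm_map]
    _ ≤ ‖z‖ + (∑' n, ‖i (a n) - D (k n)‖) * ‖z‖ :=
        norm_add_le_of_le (norm_branchSum_le _ z) herror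
    _ = (1 + ∑' n, ‖i (a n) - D (k n)‖) * ‖z‖ := by ring

theorem exists_synthesis_operator [CompleteSpace W]
    (hk : Summable fun n => ‖i (a n) - D (k n)‖) :
    ∃ Q : TreeSpace D →L[ℝ] E, ∀ z, Tendsto
      (fun N => ∑ n ∈ Finset.range N, coord (branchNode k (n + 1)) z • a n) atTop (𝓝 (Q z)) := by
  let S (N : ℕ) : TreeSpace D →L[ℝ] E :=
    ∑ n ∈ Finset.range N, (coord (branchNode k (n + 1))).smulRight (a n)
  have hS (N : ℕ) (z : TreeSpace D) :
      S N z = ∑ n ∈ Finset.range N, coord (branchNode k (n + 1)) z • a n := by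
    simp only [S, sum_apply, ContinuousLinearMap.smulRight_apply]
  have hbound (N : ℕ) (z : TreeSpace D) : ‖S N z‖ ≤ (1 + ∑' n, ‖i (a n) - D (k n)‖) * ‖z‖ :=
    hS N z ▸ norm_sum_coord_branchNode_smul_le hk N z
  simp only [← hS]
  refine exists_continuousLinearMap_tendsto
    (cauchySeq_of_dense_span hbound dense_span_range_basisVector ?_)
  rintro _ ⟨s, rfl⟩
  have hconst (N : ℕ) (hN : s.length ≤ N) :
      S N (basisVector D s) = S s.length (basisVector D s) := by
    rw [hS, hS]
    refine (Finset.sum_subset (Finset.range_mono hN) fun n _ hn => ?_).symm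
    have hne : branchNode k (n + 1) ≠ s := fun h => by
      have := length_branchNode k (n + 1)
      rw [h] at this
      exact hn (Finset.mem_range.2 (by omega))
    rw [coord_basisVector, if_neg hne, zero_smul]
  exact (tendsto_atTop_of_eventually_const hconst).cauchySeq

theorem exists_hasLeftInverse_of_isSchauderFrame [CompleteSpace W] (hD : DenseRange D)
    (i : E →ₗᵢ[ℝ] W) (hab : IsSchauderFrame a b) :
    ∃ J : E →L[ℝ] TreeSpace D, J.HasLeftInverse := by
  have hpos (n : ℕ) : 0 < ((1 : ℝ) / 2) ^ n := by positivity
  obtain ⟨a', b', hab', hb'⟩ := hab.exists_norm_le hpos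
  have hb'_tendsto (x : E) : Tendsto (fun n => b' n x) atTop (𝓝 0) :=
    squeeze_zero_norm (fun n => (b' n).le_of_opNorm_le (hb' n) x) <|
      (summable_geometric_two.mul_right ‖x‖).tendsto_atTop_zero
  choose k hk using fun n => hD.exists_dist_lt (i (a' n)) (hpos n)
  have hk_summable : Summable fun n => ‖i (a' n) - D (k n)‖ :=
    .of_nonneg_of_le (fun _ => norm_nonneg _) (fun n => dist_eq_norm (i (a' n)) _ ▸ (hk n).le)
      summable_geometric_two
  obtain ⟨J, hJ⟩ := exists_analysis_operator hab' hb'_tendsto hk_summable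
  obtain ⟨Q, hQ⟩ := exists_synthesis_operator hk_summable
  have hcoord (x : E) (m : ℕ) : coord (branchNode k (m + 1)) (J x) = b' m x := by
    refine tendsto_nhds_unique (((coord _).continuous.tendsto _).comp (hJ x))
      (tendsto_atTop_of_eventually_const (i₀ := m + 1) fun N hN => ?_)
    rw [Function.comp_apply,
      coord_sum_smul_basisVector _ (fun n => b' n x) (branchNode_succ_injective k),
      if_pos (Finset.mem_range.2 hN)]
  refine ⟨J, Q, fun x => tendsto_nhds_unique (hQ (J x)) ?_⟩
  simpa only [hcoord] using hab' x

end Frame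

end TreeSpace

end Tree

universe v

theorem exists_universal_space_for_schauderFrames_general :
    ∃ B : BanachSpace.{u}, TopologicalSpace.SeparableSpace B.X ∧ HasSchauderBasis B.X ∧
      ∀ (E : Type v) [NormedAddCommGroup E] [NormedSpace ℝ E] [CompleteSpace E],
        (∃ (a : ℕ → E) (b : ℕ → E →L[ℝ] ℝ), IsSchauderFrame a b) ↔
        ∃ F : Submodule ℝ B.X, IsClosed (F : Set B.X) ∧
          (∃ P : B.X →L[ℝ] B.X, (∀ z, P (P z) = P z) ∧
            LinearMap.range (P : B.X →ₗ[ℝ] B.X) = F) ∧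
          Nonempty (E ≃L[ℝ] F) := by
  -- `ULift` only serves to put the tree space into `Type u`.
  let D : ULift.{u} ℕ → C(ℕ → Bool, ℝ) := TopologicalSpace.denseSeq _ ∘ ULift.down
  have hD : DenseRange D := by
    rw [DenseRange, ULift.down_surjective.range_comp]
    exact TopologicalSpace.denseRange_denseSeq _
  obtain ⟨e, f, hef⟩ := (TreeSpace.hasSchauderBasis D).exists_isSchauderFrame
  refine ⟨⟨TreeSpace D⟩, hef.separableSpace, TreeSpace.hasSchauderBasis D, fun E _ _ _ => ?_⟩
  rw [← exists_hasLeftInverse_iff_exists_complemented]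
  constructor
  · rintro ⟨a, b, hab⟩
    have := hab.separableSpace
    obtain ⟨i⟩ := nonempty_linearIsometry_continuousMap_cantor ℝ E
    exact TreeSpace.exists_hasLeftInverse_of_isSchauderFrame hD i hab
  · rintro ⟨J, Q, hQJ⟩
    exact ⟨_, _, hef.comp_leftInverse hQJ⟩

/-- There exists a separable Banach space `B` with a Schauder basis such that a
separable Banach space `E` has a Schauder frame if and only if `E` is isomorphic,
via a continuous linear isomorphism, to a closed complemented subspace of `B`. -/
theorem exists_universal_space_for_schauderFrames :
    ∃ B : BanachSpace.{u}, TopologicalSpace.SeparableSpace B.X ∧ HasSchauderBasis B.X ∧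
      ∀ (E : Type u) [NormedAddCommGroup E] [NormedSpace ℝ E] [CompleteSpace E]
        [TopologicalSpace.SeparableSpace E],
        (∃ (a : ℕ → E) (b : ℕ → E →L[ℝ] ℝ), IsSchauderFrame a b) ↔
        ∃ F : Submodule ℝ B.X, IsClosed (F : Set B.X) ∧
          (∃ P : B.X →L[ℝ] B.X, (∀ z, P (P z) = P z) ∧
            LinearMap.range (P : B.X →ₗ[ℝ] B.X) = F) ∧
          Nonempty (E ≃L[ℝ] F) := by
  obtain ⟨B, hsep, hbasis, h⟩ := exists_universal_space_for_schauderFrames_general.{u, u}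
  exact ⟨B, hsep, hbasis, fun E _ _ _ _ => h E⟩
end

section
/- There exists a separable Banach space U with an unconditional Schauder basis such that every weakly sequentially complete separable Banach space E having a besselian Schauder frame is isomorphic (via a continuous linear isomorphism with continuous inverse) to a closed complemented subspace of U. -/
open Filter Topology

/-- `E` is weakly sequentially complete: every weakly Cauchy sequence is weakly
convergent. -/
def WeaklySequentiallyComplete (E : Type*) [NormedAddCommGroup E] [NormedSpace ℝ E] : Prop :=
  ∀ x : ℕ → E,
    (∀ y : E →L[ℝ] ℝ, ∃ l : ℝ, Tendsto (fun n => y (x n)) atTop (𝓝 l)) →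
    ∃ x₀ : E, ∀ y : E →L[ℝ] ℝ, Tendsto (fun n => y (x n)) atTop (𝓝 (y x₀))

universe u

/-!
In a weakly sequentially complete space the besselian condition makes the frame series weakly
unconditionally convergent with a weak limit for every choice of signs, hence unconditionally
convergent by the Orlicz–Pettis theorem. The universal space `U` is the closed span in
`C({±1}^ℕ, G)` of Rademacher functions `ε_p ⊗ g_p`, where `G` contains every separable space
isometrically (Banach–Mazur) and `(g_p)` visits infinitely often each vector of a dense set of
nonzero vectors; averaging over signs shows that these functions form an unconditional basis.

Let `((a_i, b_i))` be an unconditional frame of `E` and `J : E → G` an isometric embedding. Choose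
distinct indices `k_i` with `g_{k_i}` very close to `J a_i`. Then `x ↦ ∑ b_i(x) ε_{k_i} ⊗ g_{k_i}`
embeds `E` in `U`. Keeping only the indices `k_i` and evaluating at the constant sign `1` sends
`ε_{k_i} ⊗ g_{k_i}` to `g_{k_i}`; a small perturbation of this operator sends it to `J a_i`, and
so provides a left inverse.
-/

open Set TopologicalSpace

/-- An unconditional Schauder frame: the reconstruction series `∑ i, b i x • a i` converges
unconditionally to `x`. Any index type is allowed, so that the terms with `a i = 0` can be
discarded by restricting the index. -/
def IsUnconditionalSchauderFrame {ι X : Type*} [NormedAddCommGroup X] [NormedSpace ℝ X]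
    (a : ι → X) (b : ι → X →L[ℝ] ℝ) : Prop :=
  ∀ x : X, HasSum (fun i => b i x • a i) x

section WeakConvergence

variable {E : Type*} [AddCommGroup E] [TopologicalSpace E] [Module ℝ E]
  [IsTopologicalAddGroup E] [ContinuousSMul ℝ E] [LocallyConvexSpace ℝ E]

theorem mem_of_forall_dual_tendsto {α : Type*} {l : Filter α} [l.NeBot] {K : Set E}
    (hconv : Convex ℝ K) (hclosed : IsClosed K) {u : α → E} {x : E} (hu : ∀ᶠ n in l, u n ∈ K)
    (hux : ∀ y : E →L[ℝ] ℝ, Tendsto (fun n => y (u n)) l (𝓝 (y x))) : x ∈ K := by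
  by_contra hx
  obtain ⟨y, c, hyK, hyx⟩ := geometric_hahn_banach_closed_point hconv hclosed hx
  have hle : y x ≤ c := le_of_tendsto (hux y) (hu.mono fun n hn => (hyK _ hn).le)
  exact hyx.not_ge hle

theorem isClosed_preimage_of_forall_dual_continuous {X : Type*} [TopologicalSpace X] {s : X → E}
    (hs : ∀ y : E →L[ℝ] ℝ, Continuous fun a => y (s a)) {K : Set E} (hconv : Convex ℝ K)
    (hclosed : IsClosed K) : IsClosed (s ⁻¹' K) := by
  refine isClosed_of_closure_subset fun a ha => ?_
  have : (𝓝[s ⁻¹' K] a).NeBot := mem_closure_iff_nhdsWithin_neBot.1 ha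
  exact mem_of_forall_dual_tendsto (u := s) (l := 𝓝[s ⁻¹' K] a) hconv hclosed
    eventually_mem_nhdsWithin fun y => (hs y).continuousWithinAt

theorem isSeparable_range_of_forall_dual_tendsto {α X : Type*} {l : Filter α} [l.NeBot]
    {D : Set E} (hD : D.Countable) {u : X → α → E} {s : X → E}
    (hu : ∀ a n, u a n ∈ Submodule.span ℝ D)
    (hus : ∀ a, ∀ y : E →L[ℝ] ℝ, Tendsto (fun n => y (u a n)) l (𝓝 (y (s a)))) :
    IsSeparable (range s) := by
  refine (hD.isSeparable.span (R := ℝ)).closure.mono (range_subset_iff.2 fun a => ?_)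
  exact mem_of_forall_dual_tendsto (Submodule.convex _).closure isClosed_closure
    (.of_forall fun n => subset_closure (hu a n)) (hus a)

end WeakConvergence

section OrliczPettis

variable {E : Type*} [NormedAddCommGroup E] [NormedSpace ℝ E]

theorem exists_isOpen_norm_sub_le_of_forall_dual_continuous {X : Type*} [TopologicalSpace X]
    [BaireSpace X] [Nonempty X] {s : X → E} (hs : ∀ y : E →L[ℝ] ℝ, Continuous fun a => y (s a))
    (hsep : IsSeparable (range s)) {ε : ℝ} (hε : 0 < ε) :
    ∃ V : Set X, IsOpen V ∧ V.Nonempty ∧ ∀ a ∈ V, ∀ b ∈ V, ‖s a - s b‖ ≤ ε := by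
  obtain ⟨D, hD, hsD⟩ := hsep
  have := hD.to_subtype
  have hcover : ⋃ c : D, s ⁻¹' Metric.closedBall (c : E) (ε / 2) = univ := by
    refine eq_univ_of_forall fun a => ?_
    obtain ⟨c, hc, hac⟩ := Metric.mem_closure_iff.1 (hsD (mem_range_self a)) (ε / 2) (half_pos hε)
    exact mem_iUnion.2 ⟨⟨c, hc⟩, hac.le⟩
  obtain ⟨c, hc⟩ := nonempty_interior_of_iUnion_of_closed
    (fun c : D => isClosed_preimage_of_forall_dual_continuous hs
      (convex_closedBall (c : E) (ε / 2)) Metric.isClosed_closedBall) hcover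
  refine ⟨_, isOpen_interior, hc, fun a ha b hb => ?_⟩
  have ha' := interior_subset ha
  have hb' := interior_subset hb
  rw [mem_preimage, Metric.mem_closedBall] at ha' hb'
  rw [← dist_eq_norm]
  linarith [dist_triangle_right (s a) (s b) c]

theorem WeaklySequentiallyComplete.exists_hasSum (hE : WeaklySequentiallyComplete E) {v : ℕ → E}
    (hv : ∀ y : E →L[ℝ] ℝ, Summable fun n => y (v n)) :
    ∃ x : E, ∀ y : E →L[ℝ] ℝ, HasSum (fun n => y (v n)) (y x) := by
  have hpartial (y : E →L[ℝ] ℝ) :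
      Tendsto (fun N => y (∑ n ∈ Finset.range N, v n)) atTop (𝓝 (∑' n, y (v n))) := by
    simpa only [map_sum] using (hv y).hasSum.tendsto_sum_nat
  obtain ⟨x, hx⟩ := hE _ fun y => ⟨_, hpartial y⟩
  exact ⟨x, fun y => tendsto_nhds_unique (hpartial y) (hx y) ▸ (hv y).hasSum⟩

theorem norm_map_units_smul (y : E →L[ℝ] ℝ) (u : ℤˣ) (v : E) : ‖y (u • v)‖ = ‖y v‖ := by
  obtain rfl | rfl := Int.units_eq_one_or u <;> simp

theorem WeaklySequentiallyComplete.exists_hasSum_signs (hE : WeaklySequentiallyComplete E)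
    {v : ℕ → E} (hv : ∀ y : E →L[ℝ] ℝ, Summable fun n => y (v n)) :
    ∃ s : (ℕ → ℤˣ) → E, ∀ ω, ∀ y : E →L[ℝ] ℝ, HasSum (fun n => y (ω n • v n)) (y (s ω)) := by
  refine Classical.skolem.1 fun ω => hE.exists_hasSum fun y => ?_
  exact .of_norm_bounded (hv y).norm fun n => (norm_map_units_smul y (ω n) (v n)).le

theorem continuous_of_hasSum_signs {s : (ℕ → ℤˣ) → E} {v : ℕ → E}
    (hs : ∀ ω, ∀ y : E →L[ℝ] ℝ, HasSum (fun n => y (ω n • v n)) (y (s ω))) (y : E →L[ℝ] ℝ) :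
    Continuous fun ω => y (s ω) := by
  have hv : Summable fun n => ‖y (v n)‖ := by simpa using (hs 1 y).summable.norm
  simp_rw [fun ω => (hs ω y).tsum_eq.symm]
  exact continuous_tsum
    (fun n => (continuous_of_discreteTopology (f := fun u : ℤˣ => y (u • v n))).comp
      (continuous_apply n)) hv fun n ω => (norm_map_units_smul y (ω n) (v n)).le

theorem sub_eq_sum_of_hasSum_signs {s : (ℕ → ℤˣ) → E} {v : ℕ → E}
    (hs : ∀ ω, ∀ y : E →L[ℝ] ℝ, HasSum (fun n => y (ω n • v n)) (y (s ω))) {ω ω' : ℕ → ℤˣ}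
    {t : Finset ℕ} (hωω' : ∀ n ∉ t, ω n = ω' n) :
    s ω - s ω' = ∑ n ∈ t, (ω n • v n - ω' n • v n) := by
  refine (SeparatingDual.eq_iff_forall_dual_eq (R := ℝ)).2 fun y => ?_
  have hdiff : HasSum (fun n => y (ω n • v n - ω' n • v n)) (y (s ω - s ω')) := by
    simpa only [map_sub] using (hs ω y).sub (hs ω' y)
  rw [map_sum]
  exact hdiff.unique (hasSum_sum_of_ne_finset_zero fun n hn => by simp [hωω' n hn])

/-- This is the Orlicz–Pettis argument: the weak sums `∑ n, ω n • v n` depend weakly continuously on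
the signs `ω`, so by Baire's theorem they oscillate little on some nonempty open set of signs, where
all but finitely many coordinates of `ω` are free. -/
theorem WeaklySequentiallyComplete.summable [CompleteSpace E] (hE : WeaklySequentiallyComplete E)
    {v : ℕ → E} (hv : ∀ y : E →L[ℝ] ℝ, Summable fun n => y (v n)) : Summable v := by
  classical
  obtain ⟨s, hs⟩ := hE.exists_hasSum_signs hv
  have hsep : IsSeparable (range s) := by
    refine isSeparable_range_of_forall_dual_tendsto (l := atTop) (countable_range v)
      (u := fun ω F => ∑ n ∈ F, ω n • v n) (fun ω F => Submodule.sum_mem _ fun n _ => ?_)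
      fun ω y => by simpa only [map_sum] using! hs ω y
    rw [Units.smul_def]
    exact Submodule.smul_of_tower_mem _ _ (Submodule.subset_span (mem_range_self n))
  refine summable_iff_vanishing_norm.2 fun ε hε => ?_
  obtain ⟨V, hVopen, ⟨ω, hω⟩, hV⟩ := exists_isOpen_norm_sub_le_of_forall_dual_continuous
    (continuous_of_hasSum_signs hs) hsep hε
  obtain ⟨I, W, hW, hIV⟩ := isOpen_pi_iff.1 hVopen ω hω
  refine ⟨I, fun t ht => ?_⟩
  let modify (u : ℤˣ) : ℕ → ℤˣ := fun n => if n ∈ t then u else ω n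
  have hmodify (u : ℤˣ) : modify u ∈ V := hIV fun n hn => by
    simpa only [modify, if_neg (Finset.disjoint_right.1 ht hn)] using (hW n hn).2
  have hdiff : s (modify 1) - s (modify (-1)) = (2 : ℝ) • ∑ n ∈ t, v n := by
    rw [sub_eq_sum_of_hasSum_signs hs (t := t) fun n hn => by simp [modify, hn], Finset.smul_sum]
    exact Finset.sum_congr rfl fun n hn => by simp [modify, hn, two_smul]
  have hnorm : 2 * ‖∑ n ∈ t, v n‖ ≤ ε := by
    simpa [hdiff, norm_smul] using hV _ (hmodify 1) _ (hmodify (-1))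
  linarith

theorem IsBesselianSchauderFrame.isUnconditionalSchauderFrame [CompleteSpace E]
    (hE : WeaklySequentiallyComplete E) {a : ℕ → E} {b : ℕ → E →L[ℝ] ℝ}
    (hab : IsBesselianSchauderFrame a b) : IsUnconditionalSchauderFrame a b := by
  obtain ⟨hframe, A, -, hA⟩ := hab
  intro x
  have hsum : Summable fun n => b n x • a n := hE.summable fun y => by
    simpa only [map_smul, smul_eq_mul, abs_mul] using
      Summable.of_abs (f := fun n => y (b n x • a n))
        (by simpa only [map_smul, smul_eq_mul, abs_mul] using (hA x y).1)
  exact hsum.hasSum_iff.2 (tendsto_nhds_unique hsum.hasSum.tendsto_sum_nat (hframe x))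

end OrliczPettis

theorem IsUnconditionalSchauderFrame.separableSpace {ι X : Type*} [Countable ι]
    [NormedAddCommGroup X] [NormedSpace ℝ X] {a : ι → X} {b : ι → X →L[ℝ] ℝ}
    (hab : IsUnconditionalSchauderFrame a b) : SeparableSpace X := by
  have hspan := (countable_range a).isSeparable.span (R := ℝ)
  refine isSeparable_univ_iff.1 (hspan.closure.mono fun x _ => ?_)
  refine mem_closure_of_tendsto (hab x) (.of_forall fun F => ?_)
  exact Submodule.sum_mem _ fun i _ =>
    Submodule.smul_mem _ _ (Submodule.subset_span (mem_range_self i))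

theorem IsUnconditionalSchauderFrame.restrict_ne_zero {ι X : Type*}
    [NormedAddCommGroup X] [NormedSpace ℝ X] {a : ι → X} {b : ι → X →L[ℝ] ℝ}
    (hab : IsUnconditionalSchauderFrame a b) :
    IsUnconditionalSchauderFrame (fun i : {i // a i ≠ 0} => a i) (fun i => b i) := fun x =>
  (hasSum_subtype_iff_of_support_subset (f := fun i => b i x • a i) (s := {i | a i ≠ 0})
    fun _ hi => right_ne_zero_of_smul hi).2 (hab x)

section BanachMazur

variable {𝕜 E : Type*} [RCLike 𝕜] [NormedAddCommGroup E] [NormedSpace 𝕜 E]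

theorem nonempty_linearIsometry_of_continuous_surjective {Ω : Type*} [TopologicalSpace Ω]
    [CompactSpace Ω] (c : Ω → WeakDual.toStrongDual ⁻¹' Metric.closedBall (0 : StrongDual 𝕜 E) 1)
    (hc : Continuous c) (hsurj : Function.Surjective c) : Nonempty (E →ₗᵢ[𝕜] C(Ω, 𝕜)) := by
  let J : E →ₗ[𝕜] C(Ω, 𝕜) :=
    { toFun x := ⟨fun ω => (c ω : WeakDual 𝕜 E) x,
        (WeakDual.eval_continuous x).comp (continuous_subtype_val.comp hc)⟩
      map_add' x y := ContinuousMap.ext fun ω => map_add (c ω : WeakDual 𝕜 E) x y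
      map_smul' r x := ContinuousMap.ext fun ω => map_smul (c ω : WeakDual 𝕜 E) r x }
  refine ⟨J, fun x => le_antisymm ?_ ?_⟩
  · refine (ContinuousMap.norm_le _ (norm_nonneg x)).2 fun ω => ?_
    exact (WeakDual.toStrongDual (c ω : WeakDual 𝕜 E)).le_of_opNorm_le_of_le
      (mem_closedBall_zero_iff.1 (c ω).2) le_rfl |>.trans_eq (one_mul _)
  · obtain ⟨y, hy, hyx⟩ := exists_dual_vector'' 𝕜 x
    obtain ⟨ω, hω⟩ := hsurj ⟨StrongDual.toWeakDual y, mem_closedBall_zero_iff.2 hy⟩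
    have hJ : J x ω = ‖x‖ := (congrArg (fun z => z.1 x) hω).trans hyx
    simpa [hJ] using (J x).norm_coe_le_norm ω

theorem nonempty_linearIsometry_continuousMap_nat_bool [SeparableSpace E] :
    Nonempty (E →ₗᵢ[𝕜] C(ℕ → Bool, 𝕜)) := by
  let K := WeakDual.toStrongDual ⁻¹' Metric.closedBall (0 : StrongDual 𝕜 E) 1
  have hK : IsCompact K := WeakDual.isCompact_closedBall _ _
  have : CompactSpace K := isCompact_iff_compactSpace.1 hK
  have : MetrizableSpace K := WeakDual.metrizable_of_isCompact 𝕜 E K hK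
  let : MetricSpace K := metrizableSpaceMetric K
  have : Nonempty K := ⟨⟨0, by simp [K]⟩⟩
  obtain ⟨c, hc, hsurj⟩ := exists_nat_bool_continuous_surjective_of_compact K
  exact nonempty_linearIsometry_of_continuous_surjective c hc hsurj

end BanachMazur

section Signs

variable {ι G : Type*} [NormedAddCommGroup G]

theorem norm_sum_units_smul_le {t : Finset ι} {v : ι → G} {ε : ℝ}
    (hv : ∀ t' ⊆ t, ‖∑ i ∈ t', v i‖ ≤ ε) (u : ι → ℤˣ) : ‖∑ i ∈ t, u i • v i‖ ≤ 2 * ε := by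
  have hpos : ∑ i ∈ t with u i = 1, u i • v i = ∑ i ∈ t with u i = 1, v i :=
    Finset.sum_congr rfl fun i hi => by rw [(Finset.mem_filter.1 hi).2, one_smul]
  have hneg : ∑ i ∈ t with ¬u i = 1, u i • v i = -∑ i ∈ t with ¬u i = 1, v i := by
    rw [← Finset.sum_neg_distrib]
    refine Finset.sum_congr rfl fun i hi => ?_
    rw [(Int.units_eq_one_or (u i)).resolve_left (Finset.mem_filter.1 hi).2, Units.neg_smul,
      one_smul]
  rw [← Finset.sum_filter_add_sum_filter_not t (fun i => u i = 1), hpos, hneg, ← sub_eq_add_neg,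
    two_mul]
  exact norm_sub_le_of_le (hv _ (Finset.filter_subset _ t)) (hv _ (Finset.filter_subset _ t))

variable [NormedSpace ℝ G]

/-- The Rademacher function `ε_i ⊗ v : ω ↦ ω i • v` on the sign group `ι → ℤˣ`, as an isometric
embedding in `v`. -/
noncomputable def rademacher (i : ι) : G →ₗᵢ[ℝ] C(ι → ℤˣ, G) where
  toFun v := ⟨fun ω => ω i • v, by fun_prop⟩
  map_add' v w := ContinuousMap.ext fun ω => smul_add (ω i) v w
  map_smul' r v := ContinuousMap.ext fun ω => smul_comm (ω i) r v
  norm_map' v := by simp [ContinuousMap.norm_eq_iSup_norm, norm_units_zsmul]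

@[simp]
theorem rademacher_apply (i : ι) (v : G) (ω : ι → ℤˣ) : rademacher i v ω = ω i • v := rfl

theorem summable_rademacher [CompleteSpace G] {κ : Type*} {v : ι → G} (hv : Summable v)
    (k : ι → κ) : Summable fun i => rademacher (k i) (v i) := by
  refine summable_iff_vanishing_norm.2 fun ε hε => ?_
  obtain ⟨s, hs⟩ := summable_iff_vanishing_norm.1 hv (ε / 3) (by positivity)
  refine ⟨s, fun t ht => ?_⟩
  have hle : ‖∑ i ∈ t, rademacher (k i) (v i)‖ ≤ 2 * (ε / 3) := by
    refine (ContinuousMap.norm_le _ (by positivity)).2 fun ω => ?_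
    simpa only [ContinuousMap.sum_apply, rademacher_apply] using
      norm_sum_units_smul_le (fun t' ht' => (hs t' (ht.mono_left ht')).le) fun i => ω (k i)
  linarith

/-- The signs which are `1` on `S` and `-1` off `S`. -/
noncomputable def signOn (S : Set ι) : ι → ℤˣ := open Classical in fun i => if i ∈ S then 1 else -1

/-- The average `h ↦ (ω ↦ (h ω + h (σ ω)) / 2)`, where the signs `σ` are `1` on `S` and `-1` off
`S`. It keeps the Rademacher functions with index in `S` and kills the others. -/
noncomputable def signProj (S : Set ι) : C(ι → ℤˣ, G) →L[ℝ] C(ι → ℤˣ, G) :=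
  (2⁻¹ : ℝ) • (.id ℝ _ + ContinuousMap.compCLM ℝ G (ContinuousMap.mulLeft (signOn S)))

theorem signProj_apply (S : Set ι) (h : C(ι → ℤˣ, G)) (ω : ι → ℤˣ) :
    signProj S h ω = (2⁻¹ : ℝ) • (h ω + h (signOn S * ω)) := rfl

theorem norm_signProj_apply_le (S : Set ι) (h : C(ι → ℤˣ, G)) : ‖signProj S h‖ ≤ ‖h‖ := by
  refine (ContinuousMap.norm_le _ (norm_nonneg h)).2 fun ω => ?_
  have hadd := norm_add_le_of_le (h.norm_coe_le_norm ω) (h.norm_coe_le_norm (signOn S * ω))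
  rw [signProj_apply, norm_smul, Real.norm_of_nonneg (by positivity)]
  linarith

theorem signProj_rademacher_of_mem {S : Set ι} {i : ι} (hi : i ∈ S) (v : G) :
    signProj S (rademacher i v) = rademacher i v := by
  ext ω
  simp [signProj_apply, signOn, hi, ← two_smul ℝ, smul_smul]

theorem signProj_rademacher_of_notMem {S : Set ι} {i : ι} (hi : i ∉ S) (v : G) :
    signProj S (rademacher i v) = 0 := by
  ext ω
  simp [signProj_apply, signOn, hi]

theorem exists_dual_rademacher_eq_one (i : ι) {v : G} (hv : v ≠ 0) :
    ∃ f : C(ι → ℤˣ, G) →L[ℝ] ℝ, f (rademacher i v) = 1 ∧ ‖f‖ ≤ ‖v‖⁻¹ ∧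
      ∀ j ≠ i, ∀ w, f (rademacher j w) = 0 := by
  obtain ⟨φ, hφ, hφv⟩ := exists_dual_vector ℝ v (norm_ne_zero_iff.2 hv)
  let f : C(ι → ℤˣ, G) →L[ℝ] ℝ := ‖v‖⁻¹ • φ ∘L ContinuousMap.evalCLM ℝ 1 ∘L signProj {i}
  have hf (h : C(ι → ℤˣ, G)) : f h = ‖v‖⁻¹ * φ (signProj {i} h 1) := rfl
  refine ⟨f, ?_, ?_, fun j hj w => ?_⟩
  · simp [hf, signProj_rademacher_of_mem (mem_singleton i), hφv, norm_ne_zero_iff.2 hv]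
  · refine f.opNorm_le_bound (by positivity) fun h => ?_
    rw [hf, norm_mul, norm_inv, norm_norm]
    gcongr
    calc ‖φ (signProj {i} h 1)‖ ≤ 1 * ‖signProj {i} h‖ :=
          φ.le_of_opNorm_le_of_le hφ.le (ContinuousMap.norm_coe_le_norm _ _)
      _ ≤ ‖h‖ := (one_mul _).trans_le (norm_signProj_apply_le _ h)
  · simp [hf, signProj_rademacher_of_notMem (mem_singleton_iff.not.2 hj)]

end Signs

theorem tendsto_of_mem_topologicalClosure_span {α Y Z : Type*} [NormedAddCommGroup Y]
    [NormedSpace ℝ Y] [NormedAddCommGroup Z] [NormedSpace ℝ Z] {l : Filter α} {A : α → Y →L[ℝ] Z}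
    {B : Y →L[ℝ] Z} {C : ℝ} (hA : ∀ n y, ‖A n y‖ ≤ C * ‖y‖) {s : Set Y}
    (hs : ∀ y ∈ s, Tendsto (fun n => A n y) l (𝓝 (B y))) {y : Y}
    (hy : y ∈ (Submodule.span ℝ s).topologicalClosure) :
    Tendsto (fun n => A n y) l (𝓝 (B y)) := by
  have hequi : Equicontinuous fun n => ⇑(A n) :=
    (LipschitzWith.uniformEquicontinuous _ C.toNNReal fun n =>
      AddMonoidHomClass.lipschitz_of_bound (A n) C (hA n)).equicontinuous
  refine (hequi.isClosed_setOfPred_tendsto B.continuous).closure_subset_iff.2 (fun z hz => ?_) hy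
  induction hz using Submodule.span_induction with
  | mem z hz => exact hs z hz
  | zero => simpa only [mem_ofPred_eq, map_zero] using tendsto_const_nhds
  | add z w _ _ hz hw => simpa using hz.add hw
  | smul r z _ hz => simpa using hz.const_smul r

section RademacherSpan

variable {ι G : Type*} [NormedAddCommGroup G] [NormedSpace ℝ G] {g : ι → G}

/-- The closed linear span of the Rademacher functions `ε_i ⊗ g i`; by construction these form an
unconditional basis of it as soon as they are nonzero. -/
noncomputable def rademacherSpan (g : ι → G) : Submodule ℝ C(ι → ℤˣ, G) :=
  (Submodule.span ℝ (range fun i => rademacher i (g i))).topologicalClosure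

theorem isClosed_rademacherSpan (g : ι → G) : IsClosed (rademacherSpan g : Set C(ι → ℤˣ, G)) :=
  Submodule.isClosed_topologicalClosure _

theorem rademacher_mem_rademacherSpan (g : ι → G) (i : ι) :
    rademacher i (g i) ∈ rademacherSpan g :=
  Submodule.le_topologicalClosure _ (Submodule.subset_span (mem_range_self i))

theorem tendsto_signProj {h : C(ι → ℤˣ, G)} (hh : h ∈ rademacherSpan g) :
    Tendsto (fun F : Finset ι => signProj (F : Set ι) h) atTop (𝓝 h) := by
  refine tendsto_of_mem_topologicalClosure_span (B := .id ℝ _) (C := 1)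
    (fun F h => by simpa using norm_signProj_apply_le _ h) (forall_mem_range.2 fun i => ?_) hh
  refine tendsto_const_nhds.congr' ?_
  filter_upwards [eventually_ge_atTop {i}] with F hF
  exact (signProj_rademacher_of_mem (Finset.singleton_subset_iff.1 hF) _).symm

theorem sum_smul_rademacher_eq_signProj {f : ι → C(ι → ℤˣ, G) →L[ℝ] ℝ}
    (hf : ∀ i, f i (rademacher i (g i)) = 1) (hf' : ∀ i j, j ≠ i → f i (rademacher j (g j)) = 0)
    {h : C(ι → ℤˣ, G)} (hh : h ∈ rademacherSpan g) (F : Finset ι) :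
    ∑ i ∈ F, f i h • rademacher i (g i) = signProj (F : Set ι) h := by
  let P : C(ι → ℤˣ, G) →L[ℝ] C(ι → ℤˣ, G) := ∑ i ∈ F, (f i).smulRight (rademacher i (g i))
  have hP (h : C(ι → ℤˣ, G)) : P h = ∑ i ∈ F, f i h • rademacher i (g i) := by simp [P]
  have heq : EqOn P (signProj (F : Set ι)) (range fun i => rademacher i (g i)) := by
    refine forall_mem_range.2 fun j => ?_
    by_cases hj : j ∈ F
    · rw [signProj_rademacher_of_mem hj, hP,
        Finset.sum_eq_single_of_mem j hj fun i _ hij => by simp [hf' i j hij.symm], hf, one_smul]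
    · rw [signProj_rademacher_of_notMem hj, hP]
      exact Finset.sum_eq_zero fun i hi => by simp [hf' i j (ne_of_mem_of_not_mem hi hj).symm]
  exact (hP h).symm.trans (ContinuousLinearMap.eqOn_closure_span heq hh)

theorem hasUnconditionalSchauderBasis_rademacherSpan {g : ℕ → G} (hg : ∀ n, g n ≠ 0) :
    HasUnconditionalSchauderBasis (rademacherSpan g) := by
  choose f hf _ hf' using fun n => exists_dual_rademacher_eq_one n (hg n)
  refine ⟨fun n => ⟨_, rademacher_mem_rademacherSpan g n⟩,
    fun n => f n ∘L (rademacherSpan g).subtypeL, fun i j => ?_, fun z => ?_⟩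
  · obtain rfl | hij := eq_or_ne i j
    · simp [hf]
    · simp [hij, hf' i j hij.symm]
  · refine (IsInducing.subtypeVal.hasSum_iff (g := (rademacherSpan g).subtype) _ _).1 ?_
    exact (tendsto_signProj z.2).congr fun F =>
      (sum_smul_rademacher_eq_signProj hf (fun i j hij => hf' i j hij _) z.2 F).symm

end RademacherSpan

theorem exists_continuousLinearMap_hasSum {ι E X : Type*} [Countable ι] [NormedAddCommGroup E]
    [NormedSpace ℝ E] [CompleteSpace E] [NormedAddCommGroup X] [NormedSpace ℝ X]
    {A : ι → E →L[ℝ] X} (hA : ∀ x, Summable fun i => A i x) :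
    ∃ T : E →L[ℝ] X, ∀ x, HasSum (fun i => A i x) (T x) := by
  have hlim : Tendsto (fun (F : Finset ι) x => (∑ i ∈ F, A i) x) atTop (𝓝 fun x => ∑' i, A i x) :=
    tendsto_pi_nhds.2 fun x => (hA x).hasSum.congr fun F => (sum_apply ..).symm
  exact ⟨continuousLinearMapOfTendsto _ hlim, fun x => (hA x).hasSum⟩

theorem exists_continuousLinearMap_hasSum_smul {κ Y Z : Type*} [NormedAddCommGroup Y]
    [NormedSpace ℝ Y] [NormedAddCommGroup Z] [NormedSpace ℝ Z] [CompleteSpace Z]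
    {f : κ → Y →L[ℝ] ℝ} {d : κ → Z} (hfd : Summable fun i => ‖f i‖ * ‖d i‖) :
    ∃ R : Y →L[ℝ] Z, ∀ y, HasSum (fun i => f i y • d i) (R y) := by
  have hR : Summable fun i => (f i).smulRight (d i) :=
    .of_norm (by simpa only [ContinuousLinearMap.norm_smulRight_apply] using hfd)
  refine ⟨∑' i, (f i).smulRight (d i), fun y => ?_⟩
  simpa using! (ContinuousLinearMap.apply ℝ Z y).hasSum hR.hasSum

section Embedding

variable {ι κ E G : Type*} [NormedAddCommGroup E] [NormedSpace ℝ E] [NormedAddCommGroup G]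
  [NormedSpace ℝ G] {a : κ → E} {b : κ → E →L[ℝ] ℝ} {g : ι → G} {k : κ → ι}

/-- The unperturbed operator `h ↦ signProj (range k) h 1` sends `ε_{k i} ⊗ g (k i)` to `g (k i)`;
its image is then moved to `u i` by a norm convergent series of rank-one operators. -/
theorem exists_continuousLinearMap_rademacher_eq [CompleteSpace G] (hk : Function.Injective k)
    (hg : ∀ i, g (k i) ≠ 0) {u : κ → G}
    (hu : Summable fun i => ‖g (k i)‖⁻¹ * ‖u i - g (k i)‖) :
    ∃ W : C(ι → ℤˣ, G) →L[ℝ] G, (∀ i, W (rademacher (k i) (g (k i))) = u i) ∧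
      ∀ p ∉ range k, ∀ w, W (rademacher p w) = 0 := by
  choose f hf hfnorm hf' using fun i => exists_dual_rademacher_eq_one (k i) (hg i)
  obtain ⟨R, hR⟩ := exists_continuousLinearMap_hasSum_smul (f := f) (d := fun i => u i - g (k i))
    (hu.of_nonneg_of_le (fun i => by positivity) fun i => by gcongr; exact hfnorm i)
  have hRk (i : κ) : R (rademacher (k i) (g (k i))) = u i - g (k i) := by
    refine (hR _).unique ?_
    have hsingle := hasSum_single i
      (f := fun j => f j (rademacher (k i) (g (k i))) • (u j - g (k j)))
      fun j hj => by rw [hf' j _ (hk.ne hj.symm), zero_smul]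
    simpa only [hf, one_smul] using hsingle
  have hRp (p : ι) (hp : p ∉ range k) (w : G) : R (rademacher p w) = 0 := by
    refine (hR _).unique ?_
    simpa only [hf' _ p (ne_of_mem_of_not_mem (mem_range_self _) hp).symm, zero_smul] using
      hasSum_zero
  refine ⟨ContinuousMap.evalCLM ℝ 1 ∘L signProj (range k) + R, fun i => ?_, fun p hp w => ?_⟩
  · simp [signProj_rademacher_of_mem (mem_range_self i), hRk]
  · simp [signProj_rademacher_of_notMem hp, hRp p hp]

theorem IsUnconditionalSchauderFrame.exists_hasSum_rademacher [Countable κ] [CompleteSpace E]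
    [CompleteSpace G] (hab : IsUnconditionalSchauderFrame a b) (J : E →L[ℝ] G)
    (hb : Summable fun i => ‖b i‖ * ‖J (a i) - g (k i)‖) :
    ∃ T : E →L[ℝ] C(ι → ℤˣ, G),
      ∀ x, HasSum (fun i => b i x • rademacher (k i) (g (k i))) (T x) := by
  refine exists_continuousLinearMap_hasSum (A := fun i => (b i).smulRight (rademacher (k i) _))
    fun x => ?_
  have hJ : Summable fun i => b i x • J (a i) := by
    simpa only [map_smul] using (J.hasSum (hab x)).summable
  have hdiff : Summable fun i => b i x • (J (a i) - g (k i)) :=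
    .of_norm_bounded (hb.mul_left ‖x‖) fun i => by
      rw [norm_smul, ← mul_assoc, mul_comm ‖x‖]
      gcongr
      exact (b i).le_opNorm x
  have hg : Summable fun i => b i x • g (k i) := by
    simpa only [smul_sub, sub_sub_cancel] using hJ.sub hdiff
  exact (summable_rademacher hg k).congr fun i =>
    map_smul (rademacher (k i)) (b i x) (g (k i))

theorem IsUnconditionalSchauderFrame.exists_hasLeftInverse [Countable κ] [CompleteSpace E]
    [CompleteSpace G] (hab : IsUnconditionalSchauderFrame a b) (J : E →ₗᵢ[ℝ] G)
    (hk : Function.Injective k) (hg : ∀ i, g (k i) ≠ 0)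
    (hb : Summable fun i => ‖b i‖ * ‖J (a i) - g (k i)‖)
    (hu : Summable fun i => ‖g (k i)‖⁻¹ * ‖J (a i) - g (k i)‖) :
    ∃ T : E →L[ℝ] rademacherSpan g, T.HasLeftInverse := by
  obtain ⟨T, hT⟩ := hab.exists_hasSum_rademacher J.toContinuousLinearMap hb
  obtain ⟨W, hW, hW'⟩ := exists_continuousLinearMap_rademacher_eq hk hg hu
  have hTmem (x : E) : T x ∈ rademacherSpan g :=
    (isClosed_rademacherSpan g).mem_of_tendsto (hT x) <| .of_forall fun F =>
      Submodule.sum_mem _ fun i _ => Submodule.smul_mem _ _ (rademacher_mem_rademacherSpan g (k i))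
  have hWmem : rademacherSpan g ≤ (LinearMap.range J.toLinearMap).comap (W : _ →ₗ[ℝ] G) := by
    refine Submodule.topologicalClosure_minimal _ (Submodule.span_le.2 ?_)
      (J.isometry.isClosedEmbedding.isClosed_range.preimage W.continuous)
    rintro _ ⟨p, rfl⟩
    by_cases hp : p ∈ range k
    · obtain ⟨i, rfl⟩ := hp
      exact ⟨a i, (hW i).symm⟩
    · exact ⟨0, by simp [hW' p hp]⟩
  have hWT (x : E) : W (T x) = J x :=
    (W.hasSum (hT x)).unique <| by
      simpa [Function.comp_def, hW] using J.toContinuousLinearMap.hasSum (hab x)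
  let V := (W ∘L (rademacherSpan g).subtypeL).codRestrict (LinearMap.range J.toLinearMap)
    fun z => hWmem z.2
  refine ⟨T.codRestrict _ hTmem, .of_comp (g := V) ?_⟩
  refine J.equivRange.toContinuousLinearEquiv.hasLeftInverse.congr ?_
  ext x
  exact hWT x

end Embedding

/-- A sequence running through a countable dense set of `X`, each of whose terms is repeated
infinitely often. -/
noncomputable def repeatedDenseSeq (X : Type*) [TopologicalSpace X] [SeparableSpace X] [Nonempty X]
    (p : ℕ) : X :=
  denseSeq X p.unpair.1

theorem exists_injective_summable_repeatedDenseSeq {κ X : Type*} [Countable κ] [TopologicalSpace X]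
    [SeparableSpace X] [Nonempty X] {φ : κ → X → ℝ} (hφ : ∀ i, Continuous (φ i)) {v : κ → X}
    (hv : ∀ i, φ i (v i) = 0) :
    ∃ k : κ → ℕ, Function.Injective k ∧ Summable fun i => φ i (repeatedDenseSeq X (k i)) := by
  obtain ⟨ε, hε, c, hc, -⟩ := NNReal.exists_pos_sum_of_countable one_ne_zero κ
  have hopen (i : κ) : IsOpen {x | ‖φ i x‖ < ε i} := isOpen_lt (hφ i).norm continuous_const
  have hmem (i : κ) : v i ∈ {x | ‖φ i x‖ < ε i} := by simpa [hv] using hε i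
  choose m hm using fun i => (denseRange_denseSeq X).exists_mem_open (hopen i) ⟨v i, hmem i⟩
  obtain ⟨e, he⟩ := exists_injective_nat κ
  refine ⟨fun i => Nat.pair (m i) (e i), fun i j hij => he (Nat.pair_eq_pair.1 hij).2, ?_⟩
  refine .of_norm_bounded (NNReal.summable_coe.2 hc.summable) fun i => ?_
  simpa only [repeatedDenseSeq, Nat.unpair_pair] using (hm i).le

theorem IsUnconditionalSchauderFrame.exists_hasLeftInverse_repeatedDenseSeq {κ E G : Type*}
    [Countable κ] [NormedAddCommGroup E] [NormedSpace ℝ E] [CompleteSpace E] [NormedAddCommGroup G]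
    [NormedSpace ℝ G] [CompleteSpace G] [SecondCountableTopology G] [Nonempty {w : G // w ≠ 0}]
    {a : κ → E} {b : κ → E →L[ℝ] ℝ} (hab : IsUnconditionalSchauderFrame a b) (J : E →ₗᵢ[ℝ] G) :
    ∃ T : E →L[ℝ] rademacherSpan fun p => (repeatedDenseSeq {w : G // w ≠ 0} p : G),
      T.HasLeftInverse := by
  let v (i : {i // a i ≠ 0}) : {w : G // w ≠ 0} :=
    ⟨J (a i), (map_ne_zero_iff J J.injective).2 i.2⟩
  let φ (i : {i // a i ≠ 0}) (w : {w : G // w ≠ 0}) : ℝ :=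
    ‖b i‖ * ‖J (a i) - w‖ + ‖(w : G)‖⁻¹ * ‖J (a i) - w‖
  have hφ (i) : Continuous (φ i) := by
    have hinv : Continuous fun w : {w : G // w ≠ 0} => ‖(w : G)‖⁻¹ :=
      continuous_subtype_val.norm.inv₀ fun w => norm_ne_zero_iff.2 w.2
    fun_prop
  obtain ⟨k, hk, hsum⟩ := exists_injective_summable_repeatedDenseSeq hφ (v := v) fun i => by
    simp [φ, v]
  refine hab.restrict_ne_zero.exists_hasLeftInverse J hk
    (fun i => (repeatedDenseSeq {w : G // w ≠ 0} (k i)).2)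
    (hsum.of_nonneg_of_le (fun i => by positivity) fun i => le_add_of_nonneg_right (by positivity))
    (hsum.of_nonneg_of_le (fun i => by positivity) fun i => le_add_of_nonneg_left (by positivity))

theorem exists_submodule_equiv_of_hasLeftInverse {E U : Type*} [NormedAddCommGroup E]
    [NormedSpace ℝ E] [CompleteSpace E] [NormedAddCommGroup U] [NormedSpace ℝ U] [CompleteSpace U]
    {T : E →L[ℝ] U} (hT : T.HasLeftInverse) :
    ∃ F : Submodule ℝ U, IsClosed (F : Set U) ∧
      (∃ P : U →L[ℝ] U, (∀ z, P (P z) = P z) ∧ LinearMap.range (P : U →ₗ[ℝ] U) = F) ∧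
      Nonempty (E ≃L[ℝ] F) := by
  have ⟨S, hS⟩ := hT
  have hclosed : IsClosed (range T) := hT.isClosed_range
  have hP (z : U) : (T ∘L S) ((T ∘L S) z) = (T ∘L S) z := congrArg T (hS (S z))
  refine ⟨T.range, hclosed, ⟨T ∘L S, hP, ?_⟩, ⟨T.equivRange hS.injective hclosed⟩⟩
  exact LinearMap.range_comp_of_range_eq_top _ (LinearMap.range_eq_top.2 hS.surjective)

theorem exists_universal_space_for_besselianSchauderFrames_general :
    ∃ U : BanachSpace.{u}, SeparableSpace U.X ∧ HasUnconditionalSchauderBasis U.X ∧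
      ∀ (E : Type*) [NormedAddCommGroup E] [NormedSpace ℝ E] [CompleteSpace E],
        (∃ (a : ℕ → E) (b : ℕ → E →L[ℝ] ℝ), IsUnconditionalSchauderFrame a b) →
        ∃ F : Submodule ℝ U.X, IsClosed (F : Set U.X) ∧
          (∃ P : U.X →L[ℝ] U.X, (∀ z, P (P z) = P z) ∧
            LinearMap.range (P : U.X →ₗ[ℝ] U.X) = F) ∧
          Nonempty (E ≃L[ℝ] F) := by
  let G := ULift.{u} C(ℕ → Bool, ℝ)
  have : SecondCountableTopology G := Homeomorph.ulift.secondCountableTopology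
  have : Nonempty {w : G // w ≠ 0} := nonempty_subtype.2 (exists_ne 0)
  let g (p : ℕ) : G := repeatedDenseSeq {w : G // w ≠ 0} p
  have : CompleteSpace (rademacherSpan g) := (isClosed_rademacherSpan g).completeSpace_coe
  have hbasis : HasUnconditionalSchauderBasis (rademacherSpan g) :=
    hasUnconditionalSchauderBasis_rademacherSpan fun p =>
      (repeatedDenseSeq {w : G // w ≠ 0} p).2
  have ⟨e, f, _, hef⟩ := hbasis
  refine ⟨⟨rademacherSpan g⟩, IsUnconditionalSchauderFrame.separableSpace hef, hbasis,
    fun E _ _ _ ⟨a, b, hab⟩ => ?_⟩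
  have := hab.separableSpace
  obtain ⟨J⟩ := nonempty_linearIsometry_continuousMap_nat_bool (𝕜 := ℝ) (E := E)
  obtain ⟨T, hT⟩ := hab.exists_hasLeftInverse_repeatedDenseSeq
    ((LinearIsometryEquiv.ulift ℝ _).symm.toLinearIsometry.comp J)
  exact exists_submodule_equiv_of_hasLeftInverse hT

/-- There exists a separable Banach space `U` with an unconditional Schauder basis such
that every weakly sequentially complete separable Banach space `E` with a besselian
Schauder frame is isomorphic, via a continuous linear isomorphism, to a closed
complemented subspace of `U`. -/
theorem exists_universal_space_for_besselianSchauderFrames :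
    ∃ U : BanachSpace.{u}, TopologicalSpace.SeparableSpace U.X ∧
      HasUnconditionalSchauderBasis U.X ∧
      ∀ (E : Type u) [NormedAddCommGroup E] [NormedSpace ℝ E] [CompleteSpace E]
        [TopologicalSpace.SeparableSpace E],
        WeaklySequentiallyComplete E →
        (∃ (a : ℕ → E) (b : ℕ → E →L[ℝ] ℝ), IsBesselianSchauderFrame a b) →
        ∃ F : Submodule ℝ U.X, IsClosed (F : Set U.X) ∧
          (∃ P : U.X →L[ℝ] U.X, (∀ z, P (P z) = P z) ∧
            LinearMap.range (P : U.X →ₗ[ℝ] U.X) = F) ∧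
          Nonempty (E ≃L[ℝ] F) := by
  obtain ⟨U, hsep, hbasis, hU⟩ := exists_universal_space_for_besselianSchauderFrames_general
  exact ⟨U, hsep, hbasis, fun E _ _ _ _ hE ⟨a, b, hab⟩ =>
    hU E ⟨a, b, hab.isUnconditionalSchauderFrame hE⟩⟩
end
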